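/- arXiv:2411.10553 — 8 statements merged into one kernel-verified Lean document; each statement's English description precedes it below -/
import Mathlib

section
/- Let N ∈ ℕ be such that k_N (the largest k ≤ N with μ_N − r_N ≥ 2 μ_{k}) exists, and assume σ_N < ∞, σ_{k_N} < ∞ and ρ_N < ∞. Then for all square-summable sequences x, y : ℕ → [0,∞) one has Σ_{n ≥ N} Σ_{k ≠ n} (ω_n ω_k / |μ_n − μ_k|) · x_k · y_n ≤ ( σ_N · max{2 ρ_N, σ_{k_N}} )^{1/2} · (Σ_k x_k²)^{1/2} · (Σ_n y_n²)^{1/2}; that is, the infinite matrix with entries M_{nk} = ω_n ω_k/|μ_n − μ_k| for n ≥ N, n ≠ k (and 0 otherwise) defines a bounded operator on ℓ² with squared norm at most σ_N · max{2 ρ_N, σ_{k_N}}. -/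
open scoped ENNReal

/-- `σ_N = sup_{n ≥ N} ( Σ_{j ≠ n} ω_j²/|μ_n − μ_j| + ω_n²/r_n )`, valued in `[0,∞]`. -/
noncomputable def sigmaN (μ ω r : ℕ → ℝ) (N : ℕ) : ℝ≥0∞ :=
  ⨆ n, ⨆ (_ : N ≤ n),
    ((∑' j : ℕ, if 1 ≤ j ∧ j ≠ n then ENNReal.ofReal (ω j ^ 2 / |μ n - μ j|) else 0)
      + ENNReal.ofReal (ω n ^ 2 / r n))

/-- `ρ_N = Σ_{n ≥ N} ω_n²/μ_n`, valued in `[0,∞]`. -/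
noncomputable def rhoN (μ ω : ℕ → ℝ) (N : ℕ) : ℝ≥0∞ :=
  ∑' n : ℕ, if N ≤ n then ENNReal.ofReal (ω n ^ 2 / μ n) else 0

/-- `k_N`, the largest `k ≤ N` (with `k ≥ 1`) such that `μ_N − r_N ≥ 2 μ_k`. -/
noncomputable def kN (μ r : ℕ → ℝ) (N : ℕ) : ℕ :=
  sSup {k : ℕ | 1 ≤ k ∧ k ≤ N ∧ 2 * μ k ≤ μ N - r N}

theorem cs_tsum (F G : ℕ × ℕ → ℝ≥0∞) :
    ∑' p, F p * G p ≤ (∑' p, F p ^ (2:ℝ)) ^ (1/2 : ℝ) * (∑' p, G p ^ (2:ℝ)) ^ (1/2 : ℝ) := by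
  have h := ENNReal.lintegral_mul_le_Lp_mul_Lq (MeasureTheory.Measure.count (α := ℕ × ℕ))
    (p := 2) (q := 2) (by constructor <;> norm_num)
    (f := F) (g := G) (measurable_of_countable F).aemeasurable (measurable_of_countable G).aemeasurable
  simpa [MeasureTheory.lintegral_count] using h

theorem mono_aux (μ : ℕ → ℝ) (hμmono : ∀ n, 1 ≤ n → μ n < μ (n + 1)) (a b : ℕ) (ha : 1 ≤ a)
    (hab : a ≤ b) : μ a ≤ μ b := by
  induction b, hab using Nat.le_induction with
  | base => exact le_rfl
  | succ m hm ih => exact ih.trans (hμmono m (ha.trans hm)).le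

theorem statement4 (μ ω r : ℕ → ℝ)
    (hμ1 : 0 < μ 1)
    (hμmono : ∀ n, 1 ≤ n → μ n < μ (n + 1))
    (hμtop : Filter.Tendsto μ Filter.atTop Filter.atTop)
    (hr1 : r 1 = (μ 2 - μ 1) / 2)
    (hrn : ∀ n, 2 ≤ n → r n = min (μ n - μ (n - 1)) (μ (n + 1) - μ n) / 2)
    (hω : ∀ j, 0 ≤ ω j)
    (N : ℕ)
    (hkex : {k : ℕ | 1 ≤ k ∧ k ≤ N ∧ 2 * μ k ≤ μ N - r N}.Nonempty)
    (hσN : sigmaN μ ω r N < ⊤)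
    (hσk : sigmaN μ ω r (kN μ r N) < ⊤)
    (hρ : rhoN μ ω N < ⊤)
    (x y : ℕ → ℝ) (hx0 : ∀ k, 0 ≤ x k) (hy0 : ∀ n, 0 ≤ y n)
    (hx2 : Summable fun k => x k ^ 2) (hy2 : Summable fun n => y n ^ 2) :
    (∑' n : ℕ, ∑' k : ℕ,
        if N ≤ n ∧ 1 ≤ k ∧ k ≠ n then
          ENNReal.ofReal (ω n * ω k / |μ n - μ k| * x k * y n) else 0)
      ≤ (sigmaN μ ω r N * max (2 * rhoN μ ω N) (sigmaN μ ω r (kN μ r N))) ^ (1/2 : ℝ)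
        * (∑' k : ℕ, if 1 ≤ k then ENNReal.ofReal (x k ^ 2) else 0) ^ (1/2 : ℝ)
        * (∑' n : ℕ, if 1 ≤ n then ENNReal.ofReal (y n ^ 2) else 0) ^ (1/2 : ℝ) := by
  classical
  set K := kN μ r N with hK
  have hKmem : K ∈ {k : ℕ | 1 ≤ k ∧ k ≤ N ∧ 2 * μ k ≤ μ N - r N} :=
    Nat.sSup_mem hkex ⟨N, fun k hk => hk.2.1⟩
  obtain ⟨hK1, hKN, hKμ⟩ := hKmem
  have hmono := mono_aux μ hμmono
  have hN1 : 1 ≤ N := hK1.trans hKN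
  have hrN : 0 ≤ r N := by
    rcases Nat.lt_or_ge N 2 with h | h
    · have : N = 1 := by omega
      rw [this, hr1]
      have := hmono 1 2 le_rfl (by norm_num)
      linarith
    · rw [hrn N h]
      have h1 := hmono (N - 1) N (by omega) (by omega)
      have h2 := hmono N (N + 1) (by omega) (by omega)
      have : 0 ≤ min (μ N - μ (N - 1)) (μ (N + 1) - μ N) := le_min (by linarith) (by linarith)
      linarith
  let F : ℕ × ℕ → ℝ≥0∞ := fun p => if N ≤ p.1 ∧ 1 ≤ p.2 ∧ p.2 ≠ p.1 then
    ENNReal.ofReal (ω p.2 / √|μ p.1 - μ p.2| * y p.1) else 0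
  let G : ℕ × ℕ → ℝ≥0∞ := fun p => if N ≤ p.1 ∧ 1 ≤ p.2 ∧ p.2 ≠ p.1 then
    ENNReal.ofReal (ω p.1 / √|μ p.1 - μ p.2| * x p.2) else 0
  have hL : (∑' n : ℕ, ∑' k : ℕ,
        if N ≤ n ∧ 1 ≤ k ∧ k ≠ n then
          ENNReal.ofReal (ω n * ω k / |μ n - μ k| * x k * y n) else 0) = ∑' p, F p * G p := by
    rw [ENNReal.tsum_prod']
    refine tsum_congr fun n => tsum_congr fun k => ?_
    simp only [F, G]
    split_ifs with h
    · rw [← ENNReal.ofReal_mul (mul_nonneg (div_nonneg (hω _) (Real.sqrt_nonneg _)) (hy0 _))]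
      congr 1
      have : ω n * ω k / |μ n - μ k| = ω n * ω k / (√|μ n - μ k| * √|μ n - μ k|) := by
        rw [Real.mul_self_sqrt (abs_nonneg _)]
      rw [this, mul_comm (ω n), mul_div_mul_comm]
      ring
    · simp
  have hF : ∑' p, F p ^ (2:ℝ) ≤
      sigmaN μ ω r N * (∑' n : ℕ, if 1 ≤ n then ENNReal.ofReal (y n ^ 2) else 0) := by
    rw [ENNReal.tsum_prod', ← ENNReal.tsum_mul_left]
    refine ENNReal.tsum_le_tsum fun n => ?_
    by_cases hn : N ≤ n
    · rw [if_pos (hN1.trans hn)]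
      have h1 : ∀ k, F (n, k) ^ (2:ℝ) = (if 1 ≤ k ∧ k ≠ n then
          ENNReal.ofReal (ω k ^ 2 / |μ n - μ k|) else 0) * ENNReal.ofReal (y n ^ 2) := by
        intro k
        simp only [F, hn, true_and]
        split_ifs with h
        · rw [ENNReal.rpow_two, ← ENNReal.ofReal_pow
            (mul_nonneg (div_nonneg (hω _) (Real.sqrt_nonneg _)) (hy0 _)),
            ← ENNReal.ofReal_mul (by positivity), mul_pow, div_pow, Real.sq_sqrt (abs_nonneg _)]
        · simp
      simp_rw [h1]
      rw [ENNReal.tsum_mul_right]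
      gcongr
      exact le_self_add.trans (le_iSup₂ (f := fun n (_ : N ≤ n) =>
        ((∑' j : ℕ, if 1 ≤ j ∧ j ≠ n then ENNReal.ofReal (ω j ^ 2 / |μ n - μ j|) else 0)
      + ENNReal.ofReal (ω n ^ 2 / r n))) n hn)
    · simp [F, hn]
  have hG : ∑' p, G p ^ (2:ℝ) ≤
      max (2 * rhoN μ ω N) (sigmaN μ ω r K) *
        (∑' n : ℕ, if 1 ≤ n then ENNReal.ofReal (x n ^ 2) else 0) := by
    rw [ENNReal.tsum_prod', ENNReal.tsum_comm, ← ENNReal.tsum_mul_left]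
    refine ENNReal.tsum_le_tsum fun k => ?_
    by_cases hk : 1 ≤ k
    · rw [if_pos hk]
      have h1 : ∀ n, G (n, k) ^ (2:ℝ) = (if N ≤ n ∧ k ≠ n then
          ENNReal.ofReal (ω n ^ 2 / |μ n - μ k|) else 0) * ENNReal.ofReal (x k ^ 2) := by
        intro n
        simp only [G, hk, true_and]
        split_ifs with h
        · rw [ENNReal.rpow_two, ← ENNReal.ofReal_pow
            (mul_nonneg (div_nonneg (hω _) (Real.sqrt_nonneg _)) (hx0 _)),
            ← ENNReal.ofReal_mul (by positivity), mul_pow, div_pow, Real.sq_sqrt (abs_nonneg _)]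
        · simp
      simp_rw [h1]
      rw [ENNReal.tsum_mul_right]
      gcongr
      rcases Nat.lt_or_ge k K with hkK | hkK
      · refine le_trans ?_ (le_max_left _ _)
        rw [rhoN, ← ENNReal.tsum_mul_left]
        refine ENNReal.tsum_le_tsum fun n => ?_
        by_cases hn : N ≤ n
        · rw [if_pos hn]
          split_ifs
          · have e1 := hmono k K hk hkK.le
            have e2 := hmono N n hN1 hn
            have e3 := hmono 1 k le_rfl hk
            rw [show (2:ℝ≥0∞) = ENNReal.ofReal 2 by simp, ← ENNReal.ofReal_mul (by norm_num)]
            apply ENNReal.ofReal_le_ofReal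
            have : μ n / 2 ≤ |μ n - μ k| := le_trans (by linarith) (le_abs_self _)
            calc ω n ^ 2 / |μ n - μ k| ≤ ω n ^ 2 / (μ n / 2) := by
                  apply div_le_div_of_nonneg_left (sq_nonneg _) (by linarith) this
              _ = 2 * (ω n ^ 2 / μ n) := by rw [div_div_eq_mul_div]; ring
          · exact zero_le
        · simp [hn]
      · refine le_trans ?_ (le_max_right _ _)
        refine le_trans ?_ (le_self_add.trans (le_iSup₂ (f := fun n (_ : K ≤ n) =>
        ((∑' j : ℕ, if 1 ≤ j ∧ j ≠ n then ENNReal.ofReal (ω j ^ 2 / |μ n - μ j|) else 0)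
      + ENNReal.ofReal (ω n ^ 2 / r n))) k hkK))
        refine ENNReal.tsum_le_tsum fun n => ?_
        by_cases h : N ≤ n ∧ k ≠ n
        · rw [if_pos h, if_pos ⟨hN1.trans h.1, h.2.symm⟩, abs_sub_comm]
        · rw [if_neg h]; exact zero_le
    · simp [G, hk]
  rw [hL]
  refine (cs_tsum F G).trans ?_
  refine (mul_le_mul' (ENNReal.rpow_le_rpow hF (by norm_num))
    (ENNReal.rpow_le_rpow hG (by norm_num))).trans (le_of_eq ?_)
  rw [ENNReal.mul_rpow_of_nonneg _ _ (by norm_num), ENNReal.mul_rpow_of_nonneg _ _ (by norm_num),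
    ENNReal.mul_rpow_of_nonneg _ _ (by norm_num)]
  ring
end

section
/- Let t : ℕ → [0,∞) (indices k ≥ 1) satisfy Σ_{k=1}^∞ t_k/k < ∞ and t_k · log k → 0 as k → ∞. Then Σ_{k ≠ n} t_k/|k − n| → 0 as n → ∞. -/
open Filter Finset in
theorem aux_harm (n : ℕ) (hn : 3 ≤ n) :
    ∑ k ∈ range (2 * n), |(k : ℝ) - (n : ℝ)|⁻¹ ≤ 4 * Real.log n := by
  have hH : ∑ i ∈ range n, ((i : ℝ) + 1)⁻¹ ≤ 1 + Real.log n := by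
    have := harmonic_le_one_add_log n
    simpa [harmonic] using this
  have hlog : 1 ≤ Real.log n := by
    rw [Real.le_log_iff_exp_le (by positivity)]
    have h1 := Real.exp_one_lt_d9
    have : (3 : ℝ) ≤ n := by exact_mod_cast hn
    linarith
  have h1 : ∑ k ∈ range n, |(k : ℝ) - (n : ℝ)|⁻¹ = ∑ i ∈ range n, ((i : ℝ) + 1)⁻¹ := by
    rw [← Finset.sum_range_reflect]
    refine Finset.sum_congr rfl fun i hi => ?_
    have hi' := Finset.mem_range.1 hi
    have : ((n - 1 - i : ℕ) : ℝ) = n - 1 - i := by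
      rw [Nat.cast_sub (by omega), Nat.cast_sub (by omega)]; simp
    rw [this, show (n : ℝ) - 1 - i - n = -((i : ℝ) + 1) by ring, abs_neg, abs_of_nonneg (by positivity)]
  have h2 : ∑ k ∈ range n, |((n + k : ℕ) : ℝ) - (n : ℝ)|⁻¹ ≤ ∑ i ∈ range n, ((i : ℝ) + 1)⁻¹ := by
    calc _ = ∑ k ∈ range n, (k : ℝ)⁻¹ := by
            refine Finset.sum_congr rfl fun i hi => ?_
            simp
      _ ≤ ∑ k ∈ range (n + 1), (k : ℝ)⁻¹ := by
            rw [Finset.sum_range_succ]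
            have : (0 : ℝ) ≤ (n : ℝ)⁻¹ := by positivity
            linarith
      _ = _ := by rw [Finset.sum_range_succ']; simp
  rw [two_mul, Finset.sum_range_add]
  linarith

theorem statement8 (t : ℕ → ℝ) (ht0 : ∀ k, 0 ≤ t k)
    (hsum : Summable fun k : ℕ => if 1 ≤ k then t k / k else 0)
    (hlog : Filter.Tendsto (fun k : ℕ => t k * Real.log k) Filter.atTop (nhds 0)) :
    Filter.Tendsto
      (fun n : ℕ => ∑' k : ℕ, if 1 ≤ k ∧ k ≠ n then t k / |(k : ℝ) - (n : ℝ)| else 0)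
      Filter.atTop (nhds 0) := by
  classical
  set b : ℕ → ℝ := fun k => 2 * (if 1 ≤ k then t k / k else 0) with hb
  have hbs : Summable b := hsum.mul_left 2
  set g : ℕ → ℕ → ℝ := fun n k =>
    if 1 ≤ k ∧ (2 * k ≤ n ∨ 2 * n ≤ k) then t k / |(k : ℝ) - (n : ℝ)| else 0 with hg
  set h : ℕ → ℕ → ℝ := fun n k =>
    if n < 2 * k ∧ k < 2 * n then t k / |(k : ℝ) - (n : ℝ)| else 0 with hh
  have hg0 : ∀ n k, 0 ≤ g n k := by
    intro n k
    have := ht0 k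
    simp only [hg]; split_ifs <;> positivity
  have hgb : ∀ n k, g n k ≤ b k := by
    intro n k
    have h0 := ht0 k
    simp only [hg, hb]
    by_cases hk : 1 ≤ k
    · have hk' : (1 : ℝ) ≤ k := by exact_mod_cast hk
      rw [if_pos hk]
      split_ifs with hc
      · have key : (k : ℝ) / 2 ≤ |(k : ℝ) - n| := by
          rcases hc.2 with h1 | h1
          · have : (2 * k : ℝ) ≤ n := by exact_mod_cast h1
            rw [abs_sub_comm]
            exact le_trans (by linarith) (le_abs_self _)
          · have : (2 * n : ℝ) ≤ k := by exact_mod_cast h1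
            exact le_trans (by linarith) (le_abs_self _)
        calc t k / |(k : ℝ) - n| ≤ t k / ((k : ℝ) / 2) := by gcongr
          _ = _ := by field_simp
      · positivity
    · simp [hk]
  have hgs : ∀ n, Summable (g n) := fun n => Summable.of_nonneg_of_le (hg0 n) (hgb n) hbs
  have hhz : ∀ n, ∀ k ∉ Finset.range (2 * n), h n k = 0 := by
    intro n k hk
    have : ¬ (n < 2 * k ∧ k < 2 * n) := by
      rw [Finset.mem_range] at hk; tauto
    simp only [hh, if_neg this]
  have hhs : ∀ n, Summable (h n) := fun n => summable_of_ne_finset_zero (hhz n)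
  have hsplit : ∀ n, 1 ≤ n → (∑' k : ℕ, if 1 ≤ k ∧ k ≠ n then t k / |(k : ℝ) - (n : ℝ)| else 0)
      = ∑' k, g n k + ∑' k, h n k := by
    intro n hn
    rw [← (hgs n).tsum_add (hhs n)]
    refine tsum_congr fun k => ?_
    simp only [hg, hh]
    by_cases hkn : k = n
    · subst hkn; simp
    · split_ifs <;> first | omega | simp
  have hG : Filter.Tendsto (fun n => ∑' k, g n k) Filter.atTop (nhds 0) := by
    have := tendsto_tsum_of_dominated_convergence (𝓕 := Filter.atTop) (f := g) (g := fun _ => (0 : ℝ))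
      (bound := b) hbs ?_ ?_
    · simpa using this
    · intro k
      have h1 : Filter.Tendsto (fun n : ℕ => t k / |(k : ℝ) - (n : ℝ)|) Filter.atTop (nhds 0) := by
        apply Filter.Tendsto.const_div_atTop
        apply Filter.tendsto_abs_atBot_atTop.comp
        exact Filter.tendsto_atBot_add_const_left _ (k : ℝ)
          (Filter.tendsto_neg_atTop_atBot.comp tendsto_natCast_atTop_atTop)
      refine squeeze_zero (fun n => hg0 n k) (fun n => ?_) h1
      have := ht0 k
      simp only [hg]; split_ifs
      · exact le_rfl
      · positivity
    · refine Filter.Eventually.of_forall fun n k => ?_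
      rw [Real.norm_of_nonneg (hg0 n k)]; exact hgb n k
  have hHt : Filter.Tendsto (fun n => ∑' k, h n k) Filter.atTop (nhds 0) := by
    rw [Metric.tendsto_atTop]
    intro ε hε
    obtain ⟨N, hN⟩ := (Metric.tendsto_atTop.1 hlog) (ε / 16) (by positivity)
    refine ⟨2 * N + 4, fun n hn => ?_⟩
    have hn4 : (4 : ℝ) ≤ n := by exact_mod_cast (by omega : 4 ≤ n)
    have hL : 0 < Real.log n := Real.log_pos (by linarith)
    have hh0 : ∀ k, 0 ≤ h n k := by
      intro k
      have := ht0 k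
      simp only [hh]; split_ifs <;> positivity
    rw [tsum_eq_sum (hhz n), Real.dist_eq, sub_zero, abs_of_nonneg (Finset.sum_nonneg fun k _ => hh0 k)]
    have hle : ∀ k ∈ Finset.range (2 * n), h n k ≤ (ε / 8 / Real.log n) * |(k : ℝ) - (n : ℝ)|⁻¹ := by
      intro k _
      simp only [hh]
      split_ifs with hc
      · rw [div_eq_mul_inv]
        gcongr
        rw [le_div_iff₀ hL]
        have h1 := hN k (by omega)
        rw [Real.dist_eq, sub_zero] at h1
        have h2 := (le_abs_self _).trans h1.le
        have hk2 : (n : ℝ) < 2 * k := by exact_mod_cast hc.1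
        have h3 : Real.log n ≤ 2 * Real.log k := by
          have : Real.log ((k : ℝ) ^ 2) = 2 * Real.log k := by rw [Real.log_pow]; norm_num
          rw [← this]
          exact Real.log_le_log (by linarith) (by nlinarith)
        have := mul_le_mul_of_nonneg_left h3 (ht0 k)
        linarith
      · positivity
    calc _ ≤ ∑ k ∈ Finset.range (2 * n), (ε / 8 / Real.log n) * |(k : ℝ) - (n : ℝ)|⁻¹ :=
          Finset.sum_le_sum hle
      _ = (ε / 8 / Real.log n) * ∑ k ∈ Finset.range (2 * n), |(k : ℝ) - (n : ℝ)|⁻¹ := by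
          rw [Finset.mul_sum]
      _ ≤ (ε / 8 / Real.log n) * (4 * Real.log n) := by
          gcongr
          exact aux_harm n (by omega)
      _ = ε / 2 := by field_simp; norm_num
      _ < ε := by linarith
  have := hG.add hHt
  rw [add_zero] at this
  refine this.congr' ?_
  filter_upwards [Filter.eventually_ge_atTop 1] with n hn
  exact (hsplit n hn).symm
end

section
/- Let t : ℕ → [0,∞) (indices k ≥ 1) be nonincreasing with Σ_{k=1}^∞ t_k/k < ∞. Then t_n · log n → 0 as n → ∞, and consequently Σ_{k ≠ n} t_k/|k − n| → 0 as n → ∞. -/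
open Filter Finset in
theorem aux_t0 (t : ℕ → ℝ) (ht0 : ∀ k, 0 ≤ t k)
    (hmono : ∀ k l : ℕ, 1 ≤ k → k ≤ l → t l ≤ t k)
    (hsum : Summable fun k : ℕ => if 1 ≤ k then t k / k else 0) :
    Tendsto t atTop (nhds 0) := by
  rw [Metric.tendsto_atTop]
  intro e he
  have h : ∃ n, 1 ≤ n ∧ t n < e := by
    by_contra! hc
    have h1 : Summable fun k : ℕ => e * (1 / (k : ℝ)) := by
      refine Summable.of_nonneg_of_le (fun k => by positivity) (fun k => ?_) hsum
      split_ifs with hk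
      · rw [mul_one_div]
        have := hc k hk
        gcongr
      · have : k = 0 := by omega
        simp [this]
    rw [summable_mul_left_iff he.ne'] at h1
    exact Real.not_summable_one_div_natCast h1
  obtain ⟨n, hn, hne⟩ := h
  refine ⟨n, fun k hk => ?_⟩
  rw [Real.dist_eq, sub_zero, abs_of_nonneg (ht0 k)]
  exact (hmono n k hn hk).trans_lt hne

open Filter Finset in
theorem aux_log (t : ℕ → ℝ) (ht0 : ∀ k, 0 ≤ t k)
    (hmono : ∀ k l : ℕ, 1 ≤ k → k ≤ l → t l ≤ t k)
    (hsum : Summable fun k : ℕ => if 1 ≤ k then t k / k else 0) :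
    Tendsto (fun n : ℕ => t n * Real.log n) atTop (nhds 0) := by
  have h0 := aux_t0 t ht0 hmono hsum
  have key : Tendsto (fun n : ℕ => ∑' k : ℕ, if 1 ≤ k ∧ k ≤ n then t n / k else 0) atTop
      (nhds (∑' k : ℕ, (0 : ℝ))) := by
    refine tendsto_tsum_of_dominated_convergence hsum (fun k => ?_) (Eventually.of_forall ?_)
    · have h1 : Tendsto (fun n => t n / (k : ℝ)) atTop (nhds 0) := by
        simpa using h0.div_const (k : ℝ)
      refine squeeze_zero (fun n => ?_) (fun n => ?_) h1
      · have := ht0 n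
        split_ifs <;> positivity
      · have := ht0 n
        split_ifs
        · exact le_rfl
        · positivity
    · intro n k
      have := ht0 n
      have h2 := ht0 k
      rw [Real.norm_of_nonneg (by split_ifs <;> positivity)]
      by_cases hk : 1 ≤ k
      · by_cases hkn : k ≤ n
        · have := hmono k n hk hkn
          simp only [hk, hkn, and_self, if_true]
          gcongr
        · simp only [hk, hkn, and_false, if_true, if_false]
          positivity
      · simp [hk]
  rw [tsum_zero] at key
  refine squeeze_zero (fun n => mul_nonneg (ht0 n) (Real.log_natCast_nonneg n)) (fun n => ?_) key
  have e1 : (∑' k : ℕ, if 1 ≤ k ∧ k ≤ n then t n / (k : ℝ) else 0) = t n * (harmonic n : ℝ) := by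
    rw [tsum_eq_sum (s := Finset.Icc 1 n)]
    · rw [harmonic_eq_sum_Icc]
      push_cast
      rw [Finset.mul_sum]
      refine Finset.sum_congr rfl fun k hk => ?_
      rw [Finset.mem_Icc] at hk
      rw [if_pos hk, div_eq_mul_inv]
    · intro k hk
      rw [Finset.mem_Icc] at hk
      rw [if_neg hk]
  rw [e1]
  refine mul_le_mul_of_nonneg_left ?_ (ht0 n)
  rcases Nat.eq_zero_or_pos n with rfl | hn
  · simp
  · refine le_trans ?_ (log_add_one_le_harmonic n)
    have : (0 : ℝ) < n := by exact_mod_cast hn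
    apply Real.log_le_log this
    push_cast
    linarith

theorem aux_mid (n : ℕ) : ∑ k ∈ Finset.range (n + n), 1 / |(k : ℝ) - (n : ℝ)|
    ≤ 2 * (1 + Real.log n) := by
  have hH := harmonic_le_one_add_log n
  rw [Finset.sum_range_add]
  have h1 : ∑ k ∈ Finset.range n, 1 / |(k : ℝ) - (n : ℝ)| = (harmonic n : ℝ) := by
    rw [← Finset.sum_range_reflect, harmonic]
    push_cast
    refine Finset.sum_congr rfl fun k hk => ?_
    rw [Finset.mem_range] at hk
    have : ((n - 1 - k : ℕ) : ℝ) = n - 1 - k := by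
      rw [Nat.cast_sub (by omega), Nat.cast_sub (by omega)]; simp
    rw [this, one_div, abs_sub_comm]
    congr 1
    rw [abs_of_nonneg] <;> ring_nf
    positivity
  have h2 : ∑ k ∈ Finset.range n, 1 / |((n + k : ℕ) : ℝ) - (n : ℝ)| ≤ (harmonic n : ℝ) := by
    have e : ∀ k : ℕ, 1 / |((n + k : ℕ) : ℝ) - (n : ℝ)| = ((k : ℝ))⁻¹ := by
      intro k
      push_cast
      rw [add_sub_cancel_left, one_div, Nat.abs_cast]
    simp only [e]
    have h3 : ∑ k ∈ Finset.range n, ((k : ℝ))⁻¹ ≤ ∑ k ∈ Finset.range (n + 1), ((k : ℝ))⁻¹ := by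
      rw [Finset.sum_range_succ]
      have : (0 : ℝ) ≤ ((n : ℝ))⁻¹ := by positivity
      linarith
    refine h3.trans ?_
    rw [Finset.sum_range_succ', harmonic]
    push_cast
    simp
  rw [h1]
  linarith

open Filter in
theorem statement9 (t : ℕ → ℝ) (ht0 : ∀ k, 0 ≤ t k)
    (hmono : ∀ k l : ℕ, 1 ≤ k → k ≤ l → t l ≤ t k)
    (hsum : Summable fun k : ℕ => if 1 ≤ k then t k / k else 0) :
    Filter.Tendsto (fun n : ℕ => t n * Real.log n) Filter.atTop (nhds 0) ∧
    Filter.Tendsto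
      (fun n : ℕ => ∑' k : ℕ, if 1 ≤ k ∧ k ≠ n then t k / |(k : ℝ) - (n : ℝ)| else 0)
      Filter.atTop (nhds 0) := by
  have h0 := aux_t0 t ht0 hmono hsum
  have hl := aux_log t ht0 hmono hsum
  refine ⟨hl, ?_⟩
  let g : ℕ → ℕ → ℝ := fun n k =>
    if 1 ≤ k ∧ (2 * k ≤ n ∨ n + n ≤ k) then t k / |(k : ℝ) - (n : ℝ)| else 0
  let h : ℕ → ℕ → ℝ := fun n k =>
    if 1 ≤ k ∧ n < 2 * k ∧ k < n + n then t k / |(k : ℝ) - (n : ℝ)| else 0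
  have hb : Summable fun k : ℕ => 2 * (if 1 ≤ k then t k / (k : ℝ) else 0) := hsum.mul_left 2
  have g0 : ∀ n k, 0 ≤ g n k := by
    intro n k
    have := ht0 k
    simp only [g]
    split_ifs <;> positivity
  have gb : ∀ n k, g n k ≤ 2 * (if 1 ≤ k then t k / (k : ℝ) else 0) := by
    intro n k
    have htk := ht0 k
    simp only [g]
    by_cases hk : 1 ≤ k
    · have hk' : (0 : ℝ) < k := by exact_mod_cast hk
      by_cases hc : 2 * k ≤ n ∨ n + n ≤ k
      · simp only [hk, hc, and_self, if_true]
        have hd : (k : ℝ) / 2 ≤ |(k : ℝ) - (n : ℝ)| := by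
          rcases hc with hc | hc
          · have : 2 * (k : ℝ) ≤ n := by exact_mod_cast hc
            rw [abs_sub_comm]
            exact le_trans (by linarith) (le_abs_self _)
          · have : (n : ℝ) + n ≤ k := by exact_mod_cast hc
            exact le_trans (by linarith) (le_abs_self _)
        calc t k / |(k : ℝ) - (n : ℝ)| ≤ t k / ((k : ℝ) / 2) := by gcongr
          _ = 2 * (t k / k) := by field_simp
      · simp only [hc, and_false, if_false, hk, if_true]
        positivity
    · simp [hk]
  have gs : ∀ n, Summable (g n) := fun n => Summable.of_nonneg_of_le (g0 n) (gb n) hb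
  have hz : ∀ n k, k ∉ Finset.range (n + n) → h n k = 0 := by
    intro n k hk
    rw [Finset.mem_range] at hk
    simp only [h]
    rw [if_neg (by omega)]
  have hs : ∀ n, Summable (h n) := fun n => summable_of_ne_finset_zero (s := Finset.range (n + n)) (hz n)
  have split : ∀ n, (∑' k : ℕ, if 1 ≤ k ∧ k ≠ n then t k / |(k : ℝ) - (n : ℝ)| else 0)
      = (∑' k, g n k) + ∑' k, h n k := by
    intro n
    rw [← (gs n).tsum_add (hs n)]
    refine tsum_congr fun k => ?_
    by_cases hkn : k = n
    · subst hkn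
      simp [g, h]
    · simp only [g, h]
      by_cases hk : 1 ≤ k
      · by_cases hc : 2 * k ≤ n ∨ n + n ≤ k
        · rw [if_pos ⟨hk, hkn⟩, if_pos ⟨hk, hc⟩, if_neg (by omega), add_zero]
        · rw [if_pos ⟨hk, hkn⟩, if_neg (by tauto), if_pos (by omega), zero_add]
      · simp [hk]
  have hg : Tendsto (fun n => ∑' k, g n k) atTop (nhds (∑' k : ℕ, (0 : ℝ))) := by
    refine tendsto_tsum_of_dominated_convergence hb (fun k => ?_) (Eventually.of_forall ?_)
    · have h1 : Tendsto (fun n : ℕ => t k / |(k : ℝ) - (n : ℝ)|) atTop (nhds 0) := by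
        refine Tendsto.div_atTop tendsto_const_nhds ?_
        refine tendsto_atTop_mono (fun n => ?_)
          (tendsto_atTop_add_const_right atTop (-(k : ℝ)) tendsto_natCast_atTop_atTop)
        rw [abs_sub_comm]
        exact le_abs_self _
      refine squeeze_zero (fun n => g0 n k) (fun n => ?_) h1
      have := ht0 k
      simp only [g]
      split_ifs
      · exact le_rfl
      · positivity
    · intro n k
      rw [Real.norm_of_nonneg (g0 n k)]
      exact gb n k
  rw [tsum_zero] at hg
  have hdiv : Tendsto (fun n : ℕ => n / 2) atTop atTop :=
    Nat.tendsto_div_const_atTop (by norm_num)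
  have hh : Tendsto (fun n => ∑' k, h n k) atTop (nhds 0) := by
    have hB : Tendsto (fun m : ℕ => t m * (2 * (1 + Real.log 3)) + 2 * (t m * Real.log m)) atTop
        (nhds 0) := by
      simpa using (h0.mul_const (2 * (1 + Real.log 3))).add (hl.const_mul 2)
    refine squeeze_zero' (Eventually.of_forall fun n => tsum_nonneg fun k => ?_) ?_ (hB.comp hdiv)
    · have := ht0 k
      simp only [h]
      split_ifs <;> positivity
    · filter_upwards [eventually_ge_atTop 2] with n hn
      rw [tsum_eq_sum (hz n)]
      have hm : 1 ≤ n / 2 := by omega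
      have s1 : ∑ k ∈ Finset.range (n + n), h n k
          ≤ ∑ k ∈ Finset.range (n + n), t (n / 2) * (1 / |(k : ℝ) - (n : ℝ)|) := by
        refine Finset.sum_le_sum fun k _ => ?_
        have := ht0 (n / 2)
        simp only [h]
        split_ifs with hc
        · have := hmono (n / 2) k hm (by omega)
          rw [mul_one_div]
          gcongr
        · positivity
      rw [← Finset.mul_sum] at s1
      have s2 := mul_le_mul_of_nonneg_left (aux_mid n) (ht0 (n / 2))
      have s3 : Real.log n ≤ Real.log 3 + Real.log ((n / 2 : ℕ) : ℝ) := by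
        have p : (0 : ℝ) < ((n / 2 : ℕ) : ℝ) := by exact_mod_cast hm
        rw [← Real.log_mul (by norm_num) p.ne']
        apply Real.log_le_log
        · exact_mod_cast (by omega : 0 < n)
        · exact_mod_cast (by omega : n ≤ 3 * (n / 2))
      have s4 := mul_le_mul_of_nonneg_left s3 (ht0 (n / 2))
      simp only [Function.comp]
      linarith
  simp only [split]
  simpa using hg.add hh
end

section
/- Fix a > 1/2 and define t_j := 1/( log j · (log log j)^{2a} ) for integers j ≥ 3. Then Σ_{j ≥ 3} t_j/j < ∞ and Σ_{k ≥ 3, k ≠ n} t_k/|k − n| → 0 as n → ∞. -/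
theorem one_lt_log_aux {x : ℝ} (hx : 3 ≤ x) : 1 < Real.log x := by
  rw [Real.lt_log_iff_exp_lt (by linarith)]
  linarith [Real.exp_one_lt_d9]

theorem part1 (p : ℝ) (hp : 1 < p) :
    Summable (fun j : ℕ =>
      if 3 ≤ j then (1 / (Real.log j * Real.log (Real.log j) ^ p)) / j else 0) := by
  rw [← summable_nat_add_iff 4]
  have key : ∀ j : ℕ, 3 ≤ j →
      (1 / (Real.log ((j:ℝ)+1) * Real.log (Real.log ((j:ℝ)+1)) ^ p)) / ((j:ℝ)+1) ≤
      (Real.log (Real.log (j:ℝ)) ^ (1-p) - Real.log (Real.log ((j:ℝ)+1)) ^ (1-p)) / (p-1) := by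
    intro j hj
    have hj' : (3:ℝ) ≤ j := by exact_mod_cast hj
    have hd : ∀ x : ℝ, 3 ≤ x → HasDerivAt (fun x => Real.log (Real.log x) ^ (1-p))
        ((x⁻¹ / Real.log x) * (1-p) * Real.log (Real.log x) ^ (1-p-1)) x := by
      intro x hx
      have h1 := one_lt_log_aux hx
      have h2 := Real.log_pos h1
      exact ((Real.hasDerivAt_log (by linarith)).log (by linarith)).rpow_const (Or.inl h2.ne')
    obtain ⟨c, ⟨hc1, hc2⟩, hc⟩ := exists_hasDerivAt_eq_slope
      (fun x => Real.log (Real.log x) ^ (1-p))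
      (fun x => (x⁻¹ / Real.log x) * (1-p) * Real.log (Real.log x) ^ (1-p-1))
      (show (j:ℝ) < j + 1 by linarith)
      (fun x hx => (hd x (by linarith [hx.1])).continuousAt.continuousWithinAt)
      (fun x hx => hd x (by linarith [hx.1]))
    have h1 := one_lt_log_aux (show 3 ≤ c by linarith)
    have h2 := Real.log_pos h1
    have h3 : Real.log c ≤ Real.log ((j:ℝ)+1) := Real.log_le_log (by linarith) hc2.le
    have h4 : Real.log (Real.log c) ≤ Real.log (Real.log ((j:ℝ)+1)) :=
      Real.log_le_log (by linarith) h3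
    have e : (1-p-1) = -p := by ring
    have h5 : (Real.log (Real.log (j:ℝ)) ^ (1-p) - Real.log (Real.log ((j:ℝ)+1)) ^ (1-p)) / (p-1)
        = 1 / (Real.log c * Real.log (Real.log c) ^ p) / c := by
      have hpp : 0 < Real.log (Real.log c) ^ p := Real.rpow_pos_of_pos h2 p
      have hc0 : 0 < c := by linarith
      simp only [e, Real.rpow_neg h2.le, add_sub_cancel_left, div_one] at hc
      rw [div_eq_iff (by linarith), ← neg_sub, ← hc]
      field_simp
      ring
    rw [h5]
    have h6 : Real.log (Real.log c) ^ p ≤ Real.log (Real.log ((j:ℝ)+1)) ^ p :=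
      Real.rpow_le_rpow h2.le h4 (by linarith)
    have hpp : 0 < Real.log (Real.log c) ^ p := Real.rpow_pos_of_pos h2 p
    have hc0 : 0 < c := by linarith
    have h7 : 0 ≤ Real.log ((j:ℝ)+1) := by linarith
    gcongr
  have hG : ∀ j : ℕ, 3 ≤ j → 0 ≤ Real.log (Real.log (j:ℝ)) := fun j hj =>
    (Real.log_pos (one_lt_log_aux (by exact_mod_cast hj))).le
  refine summable_of_sum_range_le (c := Real.log (Real.log ((3:ℕ):ℝ)) ^ (1-p) / (p-1)) ?_ ?_
  · intro i
    rw [if_pos (by omega)]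
    have h1 := hG (i+4) (by omega)
    have h2 := one_lt_log_aux (x := ((i+4:ℕ):ℝ)) (by push_cast; linarith [Nat.cast_nonneg (α := ℝ) i])
    positivity
  · intro n
    have : ∀ n : ℕ, ∑ i ∈ Finset.range n, (if 3 ≤ i+4 then (1 / (Real.log ((i+4:ℕ):ℝ) * Real.log (Real.log ((i+4:ℕ):ℝ)) ^ p)) / ((i+4:ℕ):ℝ) else 0)
      ≤ (Real.log (Real.log ((3:ℕ):ℝ)) ^ (1-p) - Real.log (Real.log ((n+3:ℕ):ℝ)) ^ (1-p)) / (p-1) := by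
      intro n
      induction n with
      | zero => simp
      | succ n ih =>
        rw [Finset.sum_range_succ, if_pos (by omega)]
        have k := key (n+3) (by omega)
        have e1 : ((n+3:ℕ):ℝ)+1 = ((n+4:ℕ):ℝ) := by push_cast; ring
        rw [e1] at k
        have e2 : n+1+3 = n+4 := by ring
        rw [e2]
        have := add_le_add ih k
        rw [← add_div] at this
        refine this.trans (le_of_eq ?_)
        congr 1
        ring
    refine (this n).trans ?_
    have := Real.rpow_nonneg (hG (n+3) (by omega)) (1-p)
    have hp' : 0 < p - 1 := by linarith
    gcongr
    linarith

theorem harm_aux (n : ℕ) (hn : 1 ≤ n) :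
    ∑ k ∈ Finset.range (2*n+1), 1 / |(k:ℝ) - n| ≤ 2 * (1 + Real.log n) := by
  have H : ∑ i ∈ Finset.range n, 1 / ((i:ℝ)+1) ≤ 1 + Real.log n := by
    have := harmonic_le_one_add_log n
    simpa [harmonic] using this
  have e : 2*n+1 = n + (n+1) := by ring
  rw [e, Finset.sum_range_add, Finset.sum_range_succ', ← Finset.sum_range_reflect]
  have h1 : ∀ j ∈ Finset.range n, 1 / |((n-1-j:ℕ):ℝ) - n| = 1 / ((j:ℝ)+1) := by
    intro j hj
    have hj := Finset.mem_range.1 hj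
    have : (n:ℝ) = ((n-1-j:ℕ):ℝ) + (j+1) := by
      have : n = (n-1-j) + (j+1) := by omega
      exact_mod_cast this
    congr 1
    rw [abs_of_nonpos (by linarith [Nat.cast_nonneg (α := ℝ) j])]
    linarith
  have h2 : ∀ j ∈ Finset.range n, 1 / |((n+(j+1):ℕ):ℝ) - n| = 1 / ((j:ℝ)+1) := by
    intro j hj
    push_cast
    rw [add_sub_cancel_left, abs_of_nonneg (by positivity)]
  rw [Finset.sum_congr rfl h1, Finset.sum_congr rfl h2]
  simp only [add_zero, sub_self, abs_zero, div_zero]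
  linarith

theorem part2 (p : ℝ) (hp : 1 < p) (T : ℕ → ℝ)
    (hT : ∀ k, T k = 1 / (Real.log k * Real.log (Real.log k) ^ p)) :
    Filter.Tendsto
      (fun n : ℕ => ∑' k : ℕ,
        if 3 ≤ k ∧ k ≠ n then T k / |(k : ℝ) - (n : ℝ)| else 0)
      Filter.atTop (nhds 0) := by
  have hs := part1 p hp
  simp only [← hT] at hs
  have hT0 : ∀ k, 3 ≤ k → 0 ≤ T k := by
    intro k hk
    have h1 := one_lt_log_aux (x := (k:ℝ)) (by exact_mod_cast hk)
    have h2 := Real.log_pos h1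
    rw [hT]; positivity
  set F : ℕ → ℕ → ℝ := fun n k => if 3 ≤ k ∧ k ≠ n then T k / |(k : ℝ) - (n : ℝ)| else 0 with hF
  have hF0 : ∀ n k, 0 ≤ F n k := by
    intro n k
    simp only [hF]
    split_ifs with h
    · have := hT0 k h.1
      positivity
    · exact le_rfl
  set A : ℕ → ℕ → ℝ := fun n k => if n ≤ 2*k ∧ k ≤ 2*n then 0 else F n k with hA
  set B : ℕ → ℕ → ℝ := fun n k => if n ≤ 2*k ∧ k ≤ 2*n then F n k else 0 with hB
  have hAb : ∀ n k, ‖A n k‖ ≤ 2 * (if 3 ≤ k then T k / k else 0) := by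
    intro n k
    simp only [hA]
    split_ifs with h h3 h3
    · have := hT0 k h3
      simp; positivity
    · simp
    · rw [Real.norm_of_nonneg (hF0 n k)]
      have := hT0 k h3
      simp only [hF]
      split_ifs with h4
      · have hk : (3:ℝ) ≤ k := by exact_mod_cast h3
        have : (k:ℝ)/2 ≤ |(k:ℝ)-n| := by
          by_cases h5 : n ≤ 2*k
          · have h6 : 2*n < k := by
              by_contra h7; exact h ⟨h5, by omega⟩
            have h6' : 2*(n:ℝ) < k := by exact_mod_cast h6
            exact le_trans (by linarith) (le_abs_self _)
          · have h6' : 2*(k:ℝ) < n := by exact_mod_cast (not_le.1 h5)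
            exact le_trans (by linarith) (neg_le_abs _)
        calc T k / |(k:ℝ)-n| ≤ T k / ((k:ℝ)/2) := by gcongr
          _ = _ := by field_simp
      · positivity
    · simp [hF, h3]
  have hAsum : ∀ n, Summable (A n) := fun n => Summable.of_norm_bounded (hs.mul_left 2) (hAb n)
  have hBz : ∀ n, ∀ k ∉ Finset.range (2*n+1), B n k = 0 := by
    intro n k hk
    have : ¬ k ≤ 2*n := by simpa [Nat.lt_succ_iff] using hk
    simp [hB, this]
  have hBsum : ∀ n, Summable (B n) := fun n => summable_of_ne_finset_zero (hBz n)
  have hAB : ∀ n, ∑' k, F n k = ∑' k, A n k + ∑ k ∈ Finset.range (2*n+1), B n k := by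
    intro n
    have hh : ∑' k, B n k = ∑ k ∈ Finset.range (2*n+1), B n k := tsum_eq_sum (hBz n)
    rw [← hh, ← (hAsum n).tsum_add (hBsum n)]
    congr 1
    ext k
    simp only [hA, hB]
    split_ifs <;> simp
  have hA0 : Filter.Tendsto (fun n => ∑' k, A n k) Filter.atTop (nhds 0) := by
    have : (0:ℝ) = ∑' k : ℕ, (0:ℝ) := by simp
    rw [this]
    refine tendsto_tsum_of_dominated_convergence (hs.mul_left 2) ?_ (Filter.Eventually.of_forall hAb)
    intro k
    have hlim : Filter.Tendsto (fun n : ℕ => |T k| / |(k:ℝ) - n|) Filter.atTop (nhds 0) := by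
      apply Filter.Tendsto.const_div_atTop
      apply Filter.tendsto_abs_atBot_atTop.comp
      exact Filter.tendsto_atBot_add_const_left _ (k:ℝ) (Filter.tendsto_neg_atTop_atBot.comp tendsto_natCast_atTop_atTop)
    refine squeeze_zero_norm (fun n => ?_) hlim
    simp only [hA, hF]
    split_ifs
    · simp; positivity
    · simp
    · simp; positivity
  have hB0 : Filter.Tendsto (fun n => ∑ k ∈ Finset.range (2*n+1), B n k) Filter.atTop (nhds 0) := by
    have hL : Filter.Tendsto (fun n : ℕ => Real.log n) Filter.atTop Filter.atTop :=
      Real.tendsto_log_atTop.comp tendsto_natCast_atTop_atTop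
    have hlim : Filter.Tendsto (fun n : ℕ => 6 / Real.log (Real.log n / 2) ^ p) Filter.atTop (nhds 0) := by
      apply Filter.Tendsto.const_div_atTop
      exact (tendsto_rpow_atTop (by linarith)).comp
        (Real.tendsto_log_atTop.comp (hL.atTop_div_const (by norm_num)))
    refine squeeze_zero' (Filter.Eventually.of_forall fun n => Finset.sum_nonneg fun k _ => ?_) ?_ hlim
    · simp only [hB]
      split_ifs
      · exact hF0 n k
      · exact le_rfl
    · filter_upwards [hL.eventually_gt_atTop 2, Filter.eventually_ge_atTop 1] with n hn hn1
      have hl0 : 0 < Real.log (Real.log n / 2) := Real.log_pos (by linarith)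
      have hp0 := Real.rpow_pos_of_pos hl0 p
      have hn0 : (0:ℝ) < n := by exact_mod_cast hn1
      set C := 1 / (Real.log n / 2 * Real.log (Real.log n / 2) ^ p) with hC
      have hC0 : 0 ≤ C := by positivity
      have hb : ∀ k, B n k ≤ C * (1 / |(k:ℝ) - n|) := by
        intro k
        simp only [hB, hF]
        split_ifs with h1 h2
        · have hk : (n:ℝ)/2 ≤ k := by
            have : (n:ℝ) ≤ 2 * k := by exact_mod_cast h1.1
            linarith
          have h3 : Real.log n / 2 ≤ Real.log k := by
            have := Real.log_le_log (by positivity) hk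
            rw [Real.log_div hn0.ne' (by norm_num)] at this
            linarith [Real.log_two_lt_d9]
          have h4 : Real.log (Real.log n / 2) ≤ Real.log (Real.log k) :=
            Real.log_le_log (by linarith) h3
          have h5 := Real.rpow_le_rpow hl0.le h4 (show 0 ≤ p by linarith)
          have h6 : T k ≤ C := by
            rw [hT, hC]
            have : 0 < Real.log n / 2 := by linarith
            gcongr
          rw [div_eq_mul_one_div]
          gcongr
        · positivity
        · positivity
      calc _ ≤ ∑ k ∈ Finset.range (2*n+1), C * (1 / |(k:ℝ) - n|) := Finset.sum_le_sum fun k _ => hb k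
        _ = C * ∑ k ∈ Finset.range (2*n+1), 1 / |(k:ℝ) - n| := by rw [Finset.mul_sum]
        _ ≤ C * (2 * (1 + Real.log n)) := by gcongr; exact harm_aux n hn1
        _ ≤ C * (3 * Real.log n) := mul_le_mul_of_nonneg_left (by linarith) hC0
        _ = _ := by
          have : Real.log n ≠ 0 := by linarith
          rw [hC]; field_simp; norm_num
  have := hA0.add hB0
  rw [add_zero] at this
  exact this.congr fun n => (hAB n).symm

theorem statement10 (a : ℝ) (ha : 1 / 2 < a) :
    Summable (fun j : ℕ =>
      if 3 ≤ j then (1 / (Real.log j * Real.log (Real.log j) ^ (2 * a))) / j else 0) ∧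
    Filter.Tendsto
      (fun n : ℕ => ∑' k : ℕ,
        if 3 ≤ k ∧ k ≠ n then
          (1 / (Real.log k * Real.log (Real.log k) ^ (2 * a))) / |(k : ℝ) - (n : ℝ)| else 0)
      Filter.atTop (nhds 0) := by
  exact ⟨part1 (2*a) (by linarith), part2 (2*a) (by linarith) _ (fun k => rfl)⟩
end

section
/- Let a > 1 and set b_m := ⌊m^a⌋ for m ∈ ℕ. Let t : ℕ → [0,∞) satisfy t_j = 0 whenever j is not of the form b_m, and t_{b_m} → 0 as m → ∞. Then there exist C > 0 and N₀ ∈ ℕ such that for all n ≥ N₀: Σ_{j ≠ n} t_j/|n − j| ≤ C · (log n)/n^{1 − 1/a} + max{ t_{b_m} : m ∈ ℕ, n^{1/a} − 2 < m < n^{1/a} + 3 }. -/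
lemma aux_pow (a : ℝ) (ha : 1 < a) (x m : ℝ) (hx : 0 < x) (hm : 0 ≤ m) :
    x ^ (a - 1) * |m - x| ≤ |m ^ a - x ^ a| := by
  have e1 : x ^ a = x ^ (a - 1) * x := by
    rw [← Real.rpow_add_one hx.ne']; ring_nf
  have e2 : m ^ a = m ^ (a - 1) * m := by
    rcases hm.eq_or_lt with h | h
    · rw [← h, Real.zero_rpow (by linarith)]; simp
    · rw [← Real.rpow_add_one h.ne']; ring_nf
  have hp : 0 ≤ a - 1 := by linarith
  rcases le_total x m with h | h
  · have := Real.rpow_le_rpow hx.le h hp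
    rw [abs_of_nonneg (by linarith)]
    refine le_trans ?_ (le_abs_self _)
    rw [e1, e2]; nlinarith
  · have := Real.rpow_le_rpow hm h hp
    rw [abs_of_nonpos (by linarith)]
    refine le_trans ?_ (neg_le_abs _)
    rw [e1, e2]; nlinarith

lemma aux_tel (p : ℝ) (hp : 0 < p) (m : ℝ) (hm : 1 < m) :
    m ^ (-(p + 1)) ≤ (1 / p) * ((m - 1) ^ (-p) - m ^ (-p)) := by
  have hm0 : 0 < m := by linarith
  have h1 : 0 < 1 - 1 / m := by
    have : 1 / m < 1 := by rw [div_lt_one hm0]; exact hm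
    linarith
  have e : (m - 1) ^ (-p) = m ^ (-p) * (1 - 1 / m) ^ (-p) := by
    rw [← Real.mul_rpow hm0.le h1.le]; congr 1; field_simp
  have h2 : 1 + p / m ≤ (1 - 1 / m) ^ (-p) := by
    rw [Real.rpow_def_of_pos h1]
    have h3 := Real.log_le_sub_one_of_pos h1
    have h4 := Real.add_one_le_exp (Real.log (1 - 1 / m) * -p)
    have h5 : p / m = p * (1 / m) := by ring
    rw [h5]
    nlinarith
  have e3 : m ^ (-(p + 1)) = m ^ (-p) * (1 / m) := by
    rw [neg_add, Real.rpow_add hm0, Real.rpow_neg_one]; simp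
  have h6 : 0 < m ^ (-p) := Real.rpow_pos_of_pos hm0 _
  rw [e, e3]
  have : m ^ (-p) * (1 / m) = (1 / p) * (m ^ (-p) * (1 + p / m) - m ^ (-p)) := by
    field_simp; ring
  rw [this]
  gcongr

lemma aux_harm_s11 (k : ℕ) (hk : 1 ≤ k) (L : ℝ) (hL : (k : ℝ) ≤ Real.exp L) :
    ∑ i ∈ Finset.range k, 1 / ((i : ℝ) + 1) ≤ 1 + L := by
  have h := harmonic_le_one_add_log k
  have e : ((harmonic k : ℚ) : ℝ) = ∑ i ∈ Finset.range k, 1 / ((i : ℝ) + 1) := by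
    simp [harmonic]
  rw [e] at h
  have : Real.log k ≤ L := by
    rw [Real.log_le_iff_le_exp (by positivity)]; exact hL
  linarith

lemma aux_main (a : ℝ) (ha : 1 < a) (T : ℝ) (hT : 0 < T) (u : ℕ → ℝ) (hu0 : ∀ m, 0 ≤ u m)
    (huT : ∀ m, u m ≤ T) (n : ℕ) (hn : 4 ≤ n) (x : ℝ) (hx : 1 ≤ x) (hxn : x ^ a = n)
    (hx4 : 4 ≤ x ^ (a - 1)) (M : ℝ) (hM0 : 0 ≤ M)
    (hM : ∀ m : ℕ, |(m : ℝ) - x| < 1 / 2 → u m ≤ M) (S : Finset ℕ) :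
    ∑ m ∈ S, (if 1 ≤ ⌊(m : ℝ) ^ a⌋₊ ∧ ⌊(m : ℝ) ^ a⌋₊ ≠ n then
        u m / |((⌊(m : ℝ) ^ a⌋₊ : ℕ) : ℝ) - (n : ℝ)| else 0) ≤
      (24 * T + 4 * T / (a - 1)) * Real.log n / x ^ (a - 1) + M := by
  classical
  set g : ℕ → ℝ := fun m => (if 1 ≤ ⌊(m : ℝ) ^ a⌋₊ ∧ ⌊(m : ℝ) ^ a⌋₊ ≠ n then
        u m / |((⌊(m : ℝ) ^ a⌋₊ : ℕ) : ℝ) - (n : ℝ)| else 0) with hg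
  have hx0 : 0 < x := by linarith
  set P := x ^ (a - 1) with hP
  have hP0 : 0 < P := by linarith
  have hg0 : ∀ m, 0 ≤ g m := by
    intro m; simp only [hg]; split_ifs
    · exact div_nonneg (hu0 m) (abs_nonneg _)
    · exact le_rfl
  have hgu : ∀ m, g m ≤ u m := by
    intro m; simp only [hg]; split_ifs with h
    · apply div_le_self (hu0 m)
      have h1 : ((⌊(m : ℝ) ^ a⌋₊ : ℕ) : ℤ) - (n : ℤ) ≠ 0 := by
        have := h.2; omega
      have h2 := Int.one_le_abs h1
      exact_mod_cast h2
    · exact hu0 m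
  have hfl : ∀ m : ℕ, |(m : ℝ) ^ a - n| - 1 ≤ |((⌊(m : ℝ) ^ a⌋₊ : ℕ) : ℝ) - (n : ℝ)| := by
    intro m
    have h1 := Nat.floor_le (Real.rpow_nonneg (Nat.cast_nonneg (α := ℝ) m) a)
    have h2 := Nat.lt_floor_add_one ((m : ℝ) ^ a)
    have h3 : |(m : ℝ) ^ a - ((⌊(m : ℝ) ^ a⌋₊ : ℕ) : ℝ)| ≤ 1 := by
      rw [abs_le]; constructor <;> linarith
    have h4 := abs_sub_le ((m : ℝ) ^ a) ((⌊(m : ℝ) ^ a⌋₊ : ℕ) : ℝ) (n : ℝ)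
    linarith
  -- generic bound
  have hgD : ∀ m : ℕ, ∀ D : ℝ, 0 < D → D ≤ |((⌊(m : ℝ) ^ a⌋₊ : ℕ) : ℝ) - (n : ℝ)| →
      g m ≤ T / D := by
    intro m D hD h
    simp only [hg]; split_ifs
    · exact div_le_div₀ hT.le (huT m) hD h
    · positivity
  have hnear : ∀ m : ℕ, 1 / 2 ≤ |(m : ℝ) - x| →
      P * |(m : ℝ) - x| / 2 ≤ |((⌊(m : ℝ) ^ a⌋₊ : ℕ) : ℝ) - (n : ℝ)| := by
    intro m h
    have h1 := aux_pow a ha x m hx0 (Nat.cast_nonneg m)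
    rw [hxn] at h1
    have h2 := hfl m
    nlinarith
  set G : ℕ → ℝ := fun m => if |(m : ℝ) - x| < 1 / 2 then 0 else g m with hG
  have hG0 : ∀ m, 0 ≤ G m := by
    intro m; simp only [hG]; split_ifs
    · exact le_rfl
    · exact hg0 m
  have hGk : ∀ m : ℕ, ∀ k : ℕ, ((k : ℝ) ≤ |(m : ℝ) - x|) →
      G m ≤ 6 * T / P * (1 / ((k : ℝ) + 1)) := by
    intro m k hk
    simp only [hG]; split_ifs with h
    · positivity
    · push Not at h
      have hk3 : ((k : ℝ) + 1) / 3 ≤ |(m : ℝ) - x| := by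
        rcases Nat.eq_zero_or_pos k with h0 | h0
        · subst h0; norm_num; linarith
        · have : (1 : ℝ) ≤ k := by exact_mod_cast h0
          linarith
      have h1 := hgD m (P * (((k : ℝ) + 1) / 3) / 2) (by positivity)
        (le_trans (by gcongr) (hnear m h))
      refine h1.trans (le_of_eq ?_)
      field_simp
      norm_num
  set q := ⌊x⌋₊ with hq
  have hq1 : (q : ℝ) ≤ x := Nat.floor_le hx0.le
  have hq2 : x < q + 1 := Nat.lt_floor_add_one x
  have hn0 : (0 : ℝ) < n := by positivity
  have hxP : x ^ a = P * x := by
    rw [hP, ← Real.rpow_add_one hx0.ne']; ring_nf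
  have hlog1 : 1 ≤ Real.log n := by
    rw [Real.le_log_iff_exp_le hn0]
    have := Real.exp_one_lt_d9
    have : (4 : ℝ) ≤ n := by exact_mod_cast hn
    linarith
  have hqn : ((q + 1 : ℕ) : ℝ) ≤ Real.exp (Real.log n) := by
    rw [Real.exp_log hn0, ← hxn, hxP]; push_cast; nlinarith
  have hH := aux_harm_s11 (q + 1) (by omega) _ hqn
  have p1 : ∑ i ∈ Finset.range (q + 1), G i ≤ 6 * T / P * (1 + Real.log n) := by
    rw [← Finset.sum_range_reflect]
    calc _ ≤ ∑ i ∈ Finset.range (q + 1), 6 * T / P * (1 / ((i : ℝ) + 1)) := by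
          apply Finset.sum_le_sum
          intro i hi
          have hi' : i ≤ q := by have := Finset.mem_range.1 hi; omega
          apply hGk
          have : q + 1 - 1 - i = q - i := by omega
          rw [this, Nat.cast_sub hi']
          refine le_trans ?_ (neg_le_abs _)
          linarith
      _ ≤ _ := by
          rw [← Finset.mul_sum]; gcongr
  have p2 : ∑ i ∈ Finset.range (q + 1), G (q + 1 + i) ≤ 6 * T / P * (1 + Real.log n) := by
    calc _ ≤ ∑ i ∈ Finset.range (q + 1), 6 * T / P * (1 / ((i : ℝ) + 1)) := by
          apply Finset.sum_le_sum
          intro i hi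
          apply hGk
          refine le_trans ?_ (le_abs_self _)
          push_cast
          linarith
      _ ≤ _ := by
          rw [← Finset.mul_sum]; gcongr
  have hp0 : 0 < a - 1 := by linarith
  have p3 : ∀ L : ℕ, ∑ i ∈ Finset.range L, G (q + 1 + (q + 1) + i) ≤ 4 * T / (a - 1) / P := by
    intro L
    set w : ℕ → ℝ := fun i => ((2 * q + 1 + i : ℝ)) ^ (-(a - 1)) with hw
    have step : ∀ i : ℕ, G (q + 1 + (q + 1) + i) ≤ 4 * T / (a - 1) * (w i - w (i + 1)) := by
      intro i
      set m := q + 1 + (q + 1) + i with hm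
      have hmr : (m : ℝ) = 2 * q + 2 + i := by rw [hm]; push_cast; ring
      have hi0 : (0 : ℝ) ≤ i := Nat.cast_nonneg i
      have hm2 : 2 * x ≤ m := by rw [hmr]; linarith
      have hm0 : (0 : ℝ) < m := by linarith
      have hma : 2 * (n : ℝ) ≤ (m : ℝ) ^ a := by
        have h1 : (2 * x) ^ a ≤ (m : ℝ) ^ a := Real.rpow_le_rpow (by linarith) hm2 (by linarith)
        rw [Real.mul_rpow (by norm_num) hx0.le, hxn] at h1
        have h2 : (2 : ℝ) ≤ 2 ^ a := by
          conv_lhs => rw [← Real.rpow_one 2]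
          exact Real.rpow_le_rpow_of_exponent_le (by norm_num) ha.le
        nlinarith
      have hn4 : (4 : ℝ) ≤ n := by exact_mod_cast hn
      have h3 : (m : ℝ) ^ a / 4 ≤ |((⌊(m : ℝ) ^ a⌋₊ : ℕ) : ℝ) - (n : ℝ)| := by
        have h4 := hfl m
        have h5 := le_abs_self ((m : ℝ) ^ a - n)
        linarith
      have hma0 : 0 < (m : ℝ) ^ a := Real.rpow_pos_of_pos hm0 _
      have h6 := hgD m _ (by positivity) h3
      have h7 : G m ≤ g m := by
        simp only [hG]; split_ifs
        · exact hg0 m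
        · exact le_rfl
      have h8 := aux_tel (a - 1) hp0 m (by linarith)
      have e1 : w i = ((m : ℝ) - 1) ^ (-(a - 1)) := by
        simp only [hw]; rw [hmr]; congr 1; ring
      have e2 : w (i + 1) = (m : ℝ) ^ (-(a - 1)) := by
        simp only [hw]; rw [hmr]; congr 1; push_cast; ring
      rw [e1, e2]
      have e3 : T / ((m : ℝ) ^ a / 4) = 4 * T * (m : ℝ) ^ (-(a - 1 + 1)) := by
        rw [sub_add_cancel, Real.rpow_neg hm0.le]; field_simp
      calc G m ≤ 4 * T * (m : ℝ) ^ (-(a - 1 + 1)) := by rw [← e3]; exact h7.trans h6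
        _ ≤ 4 * T * ((1 / (a - 1)) * (((m : ℝ) - 1) ^ (-(a - 1)) - (m : ℝ) ^ (-(a - 1)))) := by
            gcongr
        _ = _ := by ring
    calc _ ≤ ∑ i ∈ Finset.range L, 4 * T / (a - 1) * (w i - w (i + 1)) :=
          Finset.sum_le_sum fun i _ => step i
      _ = 4 * T / (a - 1) * (w 0 - w L) := by rw [← Finset.mul_sum, Finset.sum_range_sub']
      _ ≤ 4 * T / (a - 1) * (1 / P) := by
          have hwL : 0 ≤ w L := by simp only [hw]; positivity
          have hw0 : w 0 ≤ 1 / P := by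
            simp only [hw]
            rw [Real.rpow_neg (by positivity), one_div]
            apply inv_anti₀ hP0
            apply Real.rpow_le_rpow hx0.le _ hp0.le
            push_cast
            have : (0 : ℝ) ≤ q := Nat.cast_nonneg q
            linarith
          have : 0 ≤ 4 * T / (a - 1) := by positivity
          gcongr
          linarith
      _ = _ := by ring
  -- assemble
  have hGS : ∑ m ∈ S, G m ≤ (24 * T + 4 * T / (a - 1)) * Real.log n / P := by
    obtain ⟨L, hL⟩ := S.exists_nat_subset_range
    have hsub : S ⊆ Finset.range (q + 1 + (q + 1) + L) :=
      hL.trans (Finset.range_mono (by omega))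
    have h1 := Finset.sum_le_sum_of_subset_of_nonneg hsub (fun i _ _ => hG0 i)
    rw [Finset.sum_range_add, Finset.sum_range_add] at h1
    have h3 := p3 L
    have h4 : 6 * T / P * (1 + Real.log n) ≤ 6 * T / P * (2 * Real.log n) := by
      gcongr; linarith
    have h5 : 4 * T / (a - 1) / P ≤ 4 * T / (a - 1) / P * Real.log n :=
      le_mul_of_one_le_right (by positivity) hlog1
    have h6 : (24 * T + 4 * T / (a - 1)) * Real.log n / P =
      2 * (6 * T / P * (2 * Real.log n)) + 4 * T / (a - 1) / P * Real.log n := by ring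
    rw [h6]; linarith
  have hE : ∑ m ∈ S, (if |(m : ℝ) - x| < 1 / 2 then g m else 0) ≤ M := by
    rw [← Finset.sum_filter]
    set F := S.filter (fun m : ℕ => |(m : ℝ) - x| < 1 / 2) with hF
    have hc : F.card ≤ 1 := by
      rw [Finset.card_le_one]
      intro i hi j hj
      have h1 := abs_lt.1 (Finset.mem_filter.1 hi).2
      have h2 := abs_lt.1 (Finset.mem_filter.1 hj).2
      have h3 : (i : ℝ) < j + 1 := by linarith
      have h4 : (j : ℝ) < i + 1 := by linarith
      have h3' : i < j + 1 := by exact_mod_cast h3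
      have h4' : j < i + 1 := by exact_mod_cast h4
      omega
    calc _ ≤ F.card • M := Finset.sum_le_card_nsmul _ _ _ (fun i hi =>
            (hgu i).trans (hM i (Finset.mem_filter.1 hi).2))
      _ ≤ 1 • M := nsmul_le_nsmul_left hM0 hc
      _ = M := one_nsmul M
  have hsplit : ∑ m ∈ S, g m = ∑ m ∈ S, G m +
      ∑ m ∈ S, (if |(m : ℝ) - x| < 1 / 2 then g m else 0) := by
    rw [← Finset.sum_add_distrib]
    apply Finset.sum_congr rfl
    intro m _
    simp only [hG]; split_ifs <;> simp
  change ∑ m ∈ S, g m ≤ _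
  rw [hsplit]; linarith

theorem statement11 (a : ℝ) (ha : 1 < a) (t : ℕ → ℝ) (ht0 : ∀ j, 0 ≤ t j)
    (hsupp : ∀ j : ℕ, 1 ≤ j → (¬ ∃ m : ℕ, 1 ≤ m ∧ ⌊(m : ℝ) ^ a⌋₊ = j) → t j = 0)
    (hlim : Filter.Tendsto (fun m : ℕ => t ⌊(m : ℝ) ^ a⌋₊) Filter.atTop (nhds 0)) :
    ∃ C > (0 : ℝ), ∃ N₀ : ℕ, ∀ n : ℕ, N₀ ≤ n →
      (∑' j : ℕ, if 1 ≤ j ∧ j ≠ n then t j / |(j : ℝ) - (n : ℝ)| else 0)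
        ≤ C * Real.log n / (n : ℝ) ^ (1 - 1 / a)
          + sSup {x : ℝ | ∃ m : ℕ, 1 ≤ m ∧ (n : ℝ) ^ (1 / a) - 2 < (m : ℝ) ∧
              (m : ℝ) < (n : ℝ) ^ (1 / a) + 3 ∧ x = t ⌊(m : ℝ) ^ a⌋₊} := by
  classical
  obtain ⟨T0, hT0⟩ := hlim.bddAbove_range
  have hp0 : 0 < a - 1 := by linarith
  have ha0 : 0 < a := by linarith
  set T := max T0 1 with hTdef
  have hT : 0 < T := lt_of_lt_of_le one_pos (le_max_right _ _)
  have huT : ∀ m : ℕ, t ⌊(m : ℝ) ^ a⌋₊ ≤ T := fun m =>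
    (hT0 ⟨m, rfl⟩).trans (le_max_left _ _)
  refine ⟨24 * T + 4 * T / (a - 1), by positivity, ?_⟩
  have hexp : 0 < 1 - 1 / a := by
    have : 1 / a < 1 := by rw [div_lt_one ha0]; exact ha
    linarith
  have htend : Filter.Tendsto (fun n : ℕ => (n : ℝ) ^ (1 - 1 / a)) Filter.atTop Filter.atTop :=
    (tendsto_rpow_atTop hexp).comp tendsto_natCast_atTop_atTop
  obtain ⟨N1, hN1⟩ := Filter.eventually_atTop.1 (htend.eventually_ge_atTop 4)
  refine ⟨max N1 4, fun n hn => ?_⟩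
  have hn4 : 4 ≤ n := (le_max_right _ _).trans hn
  have h4 := hN1 n ((le_max_left _ _).trans hn)
  have hnr : (1 : ℝ) ≤ n := by exact_mod_cast (by omega : 1 ≤ n)
  set x := (n : ℝ) ^ (1 / a) with hx
  have hx1 : 1 ≤ x := Real.one_le_rpow hnr (by positivity)
  have hxn : x ^ a = n := by
    rw [hx, ← Real.rpow_mul (by positivity), one_div_mul_cancel ha0.ne', Real.rpow_one]
  have hxP : x ^ (a - 1) = (n : ℝ) ^ (1 - 1 / a) := by
    rw [hx, ← Real.rpow_mul (by positivity)]; congr 1; field_simp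
  set W := {y : ℝ | ∃ m : ℕ, 1 ≤ m ∧ x - 2 < (m : ℝ) ∧
              (m : ℝ) < x + 3 ∧ y = t ⌊(m : ℝ) ^ a⌋₊} with hW
  have hWb : BddAbove W := ⟨T, by rintro y ⟨m, -, -, -, rfl⟩; exact huT m⟩
  have hW0 : 0 ≤ sSup W := Real.sSup_nonneg (by rintro y ⟨m, -, -, -, rfl⟩; exact ht0 _)
  have hM : ∀ m : ℕ, |(m : ℝ) - x| < 1 / 2 → t ⌊(m : ℝ) ^ a⌋₊ ≤ sSup W := by
    intro m hm
    have h1 := abs_lt.1 hm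
    apply le_csSup hWb
    refine ⟨m, ?_, by linarith, by linarith, rfl⟩
    have : (0 : ℝ) < m := by linarith
    exact_mod_cast this
  rw [← hxP] at h4 ⊢
  have key := aux_main a ha T hT (fun m => t ⌊(m : ℝ) ^ a⌋₊) (fun _ => ht0 _) huT n hn4 x hx1 hxn
    h4 (sSup W) hW0 hM
  have hR : 0 ≤ (24 * T + 4 * T / (a - 1)) * Real.log n / x ^ (a - 1) + sSup W := by
    simpa using key ∅
  set F : ℕ → ℝ := fun j => if 1 ≤ j ∧ j ≠ n then t j / |(j : ℝ) - (n : ℝ)| else 0 with hF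
  have hex : ∀ j : ℕ, ∃ m : ℕ, F j ≠ 0 → ⌊(m : ℝ) ^ a⌋₊ = j := by
    intro j
    by_cases h : ∃ m : ℕ, 1 ≤ m ∧ ⌊(m : ℝ) ^ a⌋₊ = j
    · obtain ⟨m, -, hm⟩ := h
      exact ⟨m, fun _ => hm⟩
    · refine ⟨0, fun hj => absurd ?_ hj⟩
      simp only [hF]; split_ifs with h1
      · rw [hsupp j h1.1 h, zero_div]
      · rfl
  choose c hc using hex
  apply tsum_le_of_sum_le' hR
  intro s
  have hs : ∑ j ∈ s, F j = ∑ m ∈ (s.filter (fun j => F j ≠ 0)).image c, F ⌊(m : ℝ) ^ a⌋₊ := by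
    rw [Finset.sum_image, ← Finset.sum_filter_ne_zero]
    · apply Finset.sum_congr rfl
      intro j hj
      rw [hc j (Finset.mem_filter.1 hj).2]
    · intro i hi j hj hij
      rw [← hc i (Finset.mem_filter.1 hi).2, ← hc j (Finset.mem_filter.1 hj).2, hij]
  rw [hs]
  exact key _
end

section
/- Let a > 1, set b_m := ⌊m^a⌋ for m ∈ ℕ, and let t : ℕ → [0,∞) satisfy t_j = 0 whenever j is not of the form b_m, and t_{b_m} → 0 as m → ∞. Then Σ_{j=1}^∞ t_j/j < ∞ and Σ_{j ≠ n} t_j/|n − j| → 0 as n → ∞. -/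
theorem aux_b_super (a : ℝ) (ha : 1 < a) (x y : ℕ) :
    ⌊(x : ℝ) ^ a⌋₊ + ⌊(y : ℝ) ^ a⌋₊ ≤ ⌊((x + y : ℕ) : ℝ) ^ a⌋₊ := by
  have hx : (0 : ℝ) ≤ (x : ℝ) := by positivity
  have hy : (0 : ℝ) ≤ (y : ℝ) := by positivity
  apply Nat.le_floor
  push_cast
  have h1 := Nat.floor_le (Real.rpow_nonneg hx a)
  have h2 := Nat.floor_le (Real.rpow_nonneg hy a)
  have h3 := Real.add_rpow_le_rpow_add hx hy ha.le
  linarith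

theorem aux_c_summable (a : ℝ) (ha : 1 < a) :
    Summable (fun i : ℕ => 1 / max (1 : ℝ) (⌊(i : ℝ) ^ a⌋₊ : ℝ)) := by
  rw [← summable_nat_add_iff 1]
  have h := (Real.summable_one_div_nat_rpow (p := a)).2 ha
  rw [← summable_nat_add_iff 1] at h
  refine Summable.of_nonneg_of_le (fun i => by positivity) (fun i => ?_) (h.mul_left 2)
  have hp : (0 : ℝ) < ((i + 1 : ℕ) : ℝ) ^ a := by positivity
  have h1 := Nat.lt_floor_add_one (((i + 1 : ℕ) : ℝ) ^ a)
  have h2 := le_max_left (1 : ℝ) (⌊((i + 1 : ℕ) : ℝ) ^ a⌋₊ : ℝ)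
  have h3 := le_max_right (1 : ℝ) (⌊((i + 1 : ℕ) : ℝ) ^ a⌋₊ : ℝ)
  rw [mul_one_div, div_le_div_iff₀ (by linarith) hp]
  linarith

/-- Abstract version. -/
theorem aux_main_s12 (b : ℕ → ℕ) (hb0 : b 0 = 0) (hbs : ∀ x y, b x + b y ≤ b (x + y))
    (hb1 : 1 ≤ b 1) (hc : Summable (fun i : ℕ => 1 / max (1 : ℝ) (b i : ℝ)))
    (t : ℕ → ℝ) (ht0 : ∀ j, 0 ≤ t j)
    (hsupp : ∀ j : ℕ, 1 ≤ j → (¬ ∃ m : ℕ, 1 ≤ m ∧ b m = j) → t j = 0)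
    (hlim : Filter.Tendsto (fun m : ℕ => t (b m)) Filter.atTop (nhds 0)) :
    Summable (fun j : ℕ => if 1 ≤ j then t j / j else 0) ∧
    Filter.Tendsto
      (fun n : ℕ => ∑' j : ℕ, if 1 ≤ j ∧ j ≠ n then t j / |(j : ℝ) - (n : ℝ)| else 0)
      Filter.atTop (nhds 0) := by
  have hmono : StrictMono b := strictMono_nat_of_lt_succ (fun n => by
    have := hbs n 1; omega)
  have hid : ∀ m, m ≤ b m := fun _ => hmono.le_apply
  set c : ℕ → ℝ := fun i => 1 / max (1 : ℝ) (b i : ℝ) with hcdef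
  have hc0 : ∀ i, 0 ≤ c i := fun i => by simp only [hcdef]; positivity
  obtain ⟨C, hC⟩ := hlim.bddAbove_range
  have hC : ∀ m, t (b m) ≤ C := fun m => hC ⟨m, rfl⟩
  have hinj : Function.Injective (fun m : ℕ => b (m + 1)) := fun x y h => by
    have := hmono.injective h; omega
  -- key term bound
  have key : ∀ (i m d : ℕ), 1 ≤ d → b i ≤ d → t (b m) / (d : ℝ) ≤ t (b m) * c i := by
    intro i m d h1 h2
    rw [div_eq_mul_one_div]
    apply mul_le_mul_of_nonneg_left _ (ht0 _)
    apply one_div_le_one_div_of_le (by positivity)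
    exact max_le (by exact_mod_cast h1) (by exact_mod_cast h2)
  constructor
  · rw [← hinj.summable_iff]
    · rw [← summable_nat_add_iff 1] at hc
      refine Summable.of_nonneg_of_le (fun i => ?_) (fun i => ?_) (hc.mul_left C)
      · simp only [Function.comp]
        split_ifs
        · exact div_nonneg (ht0 _) (by positivity)
        · exact le_rfl
      · have h1 : 1 ≤ b (i + 1) := le_trans (by omega) (hid (i + 1))
        simp only [Function.comp, if_pos h1]
        exact (key (i + 1) (i + 1) _ h1 le_rfl).trans
          (mul_le_mul_of_nonneg_right (hC _) (hc0 _))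
    · intro j hj
      by_cases h1 : 1 ≤ j
      · rw [if_pos h1, hsupp j h1, zero_div]
        rintro ⟨m, hm, rfl⟩
        exact hj ⟨m - 1, by simp only []; congr 1; omega⟩
      · rw [if_neg h1]
  · let M : ℕ → ℕ := fun n => Nat.findGreatest (fun k => b k ≤ n) n
    have hM1 : ∀ n, b (M n) ≤ n := fun n =>
      Nat.findGreatest_spec (P := fun k => b k ≤ n) (Nat.zero_le n) (by simp [hb0])
    have hM3 : ∀ n K, b K ≤ n → K ≤ M n := fun n K h =>
      Nat.le_findGreatest ((hid K).trans h) h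
    have hM2 : ∀ n, n < b (M n + 1) := fun n => by
      by_contra h
      have := hM3 n _ (not_lt.1 h)
      omega
    have hMt : Filter.Tendsto M Filter.atTop Filter.atTop := by
      refine Filter.tendsto_atTop.2 (fun K => ?_)
      filter_upwards [Filter.eventually_ge_atTop (b K)] with n hn using hM3 n K hn
    let H : ℕ → ℝ := fun k => ∑' i, t (b (i + k + 1)) * c i
    let L : ℕ → ℝ := fun k => ∑' i, if i < k then t (b (k - i)) * c i else 0
    have hH : Filter.Tendsto H Filter.atTop (nhds 0) := by
      have := tendsto_tsum_of_dominated_convergence (𝓕 := Filter.atTop)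
        (f := fun (k i : ℕ) => t (b (i + k + 1)) * c i) (g := fun _ => (0 : ℝ))
        (bound := fun i => C * c i) (hc.mul_left C) ?_ ?_
      · simpa using this
      · intro i
        have h1 : Filter.Tendsto (fun k : ℕ => i + k + 1) Filter.atTop Filter.atTop :=
          Filter.tendsto_atTop_mono (fun k => by simp only [id]; omega) Filter.tendsto_id
        simpa using (hlim.comp h1).mul_const (c i)
      · refine Filter.Eventually.of_forall (fun k i => ?_)
        rw [Real.norm_of_nonneg (mul_nonneg (ht0 _) (hc0 _))]
        exact mul_le_mul_of_nonneg_right (hC _) (hc0 _)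
    have hL : Filter.Tendsto L Filter.atTop (nhds 0) := by
      have := tendsto_tsum_of_dominated_convergence (𝓕 := Filter.atTop)
        (f := fun (k i : ℕ) => if i < k then t (b (k - i)) * c i else 0)
        (g := fun _ => (0 : ℝ))
        (bound := fun i => C * c i) (hc.mul_left C) ?_ ?_
      · simpa using this
      · intro i
        have h1 : Filter.Tendsto (fun k : ℕ => k - i) Filter.atTop Filter.atTop :=
          Filter.tendsto_sub_atTop_nat i
        have h2 : Filter.Tendsto (fun k : ℕ => t (b (k - i)) * c i) Filter.atTop (nhds 0) := by
          simpa using (hlim.comp h1).mul_const (c i)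
        refine h2.congr' ?_
        filter_upwards [Filter.eventually_gt_atTop i] with k hk
        rw [if_pos hk]
      · refine Filter.Eventually.of_forall (fun k i => ?_)
        have h3 : t (b (k - i)) * c i ≤ C * c i := mul_le_mul_of_nonneg_right (hC _) (hc0 _)
        have h4 : 0 ≤ t (b (k - i)) * c i := mul_nonneg (ht0 _) (hc0 _)
        split_ifs
        · rw [Real.norm_of_nonneg h4]; exact h3
        · simpa using h4.trans h3
    have hHL : Filter.Tendsto (fun n => L (M n) + H (M n)) Filter.atTop (nhds 0) := by
      simpa using (hL.comp hMt).add (hH.comp hMt)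
    have hF0 : ∀ n j : ℕ,
        0 ≤ (if 1 ≤ j ∧ j ≠ n then t j / |(j : ℝ) - (n : ℝ)| else 0) := by
      intro n j
      split_ifs
      · exact div_nonneg (ht0 _) (abs_nonneg _)
      · exact le_rfl
    refine squeeze_zero (fun n => tsum_nonneg (hF0 n)) (fun n => ?_) hHL
    set F : ℕ → ℝ := fun j => if 1 ≤ j ∧ j ≠ n then t j / |(j : ℝ) - (n : ℝ)| else 0 with hF
    have hre : ∑' j, F j = ∑' m, F (b (m + 1)) := by
      symm
      refine hinj.tsum_eq (f := F) ?_
      intro j hj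
      by_contra hj2
      apply hj
      simp only [hF]
      split_ifs with h
      · rw [hsupp j h.1, zero_div]
        rintro ⟨m, hm, rfl⟩
        exact hj2 ⟨m - 1, by simp only []; congr 1; omega⟩
      · rfl
    have hup : ∀ i, F (b (i + M n + 1)) ≤ t (b (i + M n + 1)) * c i := by
      intro i
      simp only [hF]
      split_ifs with h
      · have h1 := hbs i (M n + 1)
        have h2 := hM2 n
        rw [← add_assoc] at h1
        have h3 : |((b (i + M n + 1) : ℕ) : ℝ) - (n : ℝ)| = ((b (i + M n + 1) - n : ℕ) : ℝ) := by
          rw [Nat.cast_sub (by omega), abs_of_nonneg]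
          rw [sub_nonneg]
          exact_mod_cast (by omega : n ≤ b (i + M n + 1))
        rw [h3]
        exact key _ _ _ (by omega) (by omega)
      · exact mul_nonneg (ht0 _) (hc0 _)
    have hdn : ∀ i, i < M n → F (b (M n - i)) ≤ t (b (M n - i)) * c i := by
      intro i hi
      simp only [hF]
      split_ifs with h
      · have h1 := hbs i (M n - i)
        have h2 := hM1 n
        rw [show i + (M n - i) = M n by omega] at h1
        have h3 : |((b (M n - i) : ℕ) : ℝ) - (n : ℝ)| = ((n - b (M n - i) : ℕ) : ℝ) := by
          rw [Nat.cast_sub (by omega), abs_sub_comm, abs_of_nonneg]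
          rw [sub_nonneg]
          exact_mod_cast (by omega : b (M n - i) ≤ n)
        rw [h3]
        exact key _ _ _ (by omega) (by omega)
      · exact mul_nonneg (ht0 _) (hc0 _)
    have hsH : Summable (fun i => t (b (i + M n + 1)) * c i) :=
      Summable.of_nonneg_of_le (fun i => mul_nonneg (ht0 _) (hc0 _))
        (fun i => mul_le_mul_of_nonneg_right (hC _) (hc0 _)) (hc.mul_left C)
    have hsU : Summable (fun i => F (b (i + M n + 1))) :=
      Summable.of_nonneg_of_le (fun i => hF0 n _) hup hsH
    have hsG : Summable (fun m => F (b (m + 1))) :=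
      (summable_nat_add_iff (f := fun m => F (b (m + 1))) (M n)).1 hsU
    rw [hre, ← hsG.sum_add_tsum_nat_add (M n)]
    refine add_le_add ?_ (hsU.tsum_le_tsum hup hsH)
    have hLs : L (M n) = ∑ i ∈ Finset.range (M n), t (b (M n - i)) * c i := by
      simp only [L]
      rw [tsum_eq_sum (s := Finset.range (M n))]
      · exact Finset.sum_congr rfl (fun i hi => if_pos (Finset.mem_range.1 hi))
      · intro i hi
        exact if_neg (fun h => hi (Finset.mem_range.2 h))
    rw [hLs, ← Finset.sum_range_reflect]
    refine Finset.sum_le_sum (fun i hi => ?_)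
    have hi := Finset.mem_range.1 hi
    rw [show M n - 1 - i + 1 = M n - i by omega]
    exact hdn i hi

theorem statement12 (a : ℝ) (ha : 1 < a) (t : ℕ → ℝ) (ht0 : ∀ j, 0 ≤ t j)
    (hsupp : ∀ j : ℕ, 1 ≤ j → (¬ ∃ m : ℕ, 1 ≤ m ∧ ⌊(m : ℝ) ^ a⌋₊ = j) → t j = 0)
    (hlim : Filter.Tendsto (fun m : ℕ => t ⌊(m : ℝ) ^ a⌋₊) Filter.atTop (nhds 0)) :
    Summable (fun j : ℕ => if 1 ≤ j then t j / j else 0) ∧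
    Filter.Tendsto
      (fun n : ℕ => ∑' j : ℕ, if 1 ≤ j ∧ j ≠ n then t j / |(j : ℝ) - (n : ℝ)| else 0)
      Filter.atTop (nhds 0) := by
  refine aux_main_s12 (fun m : ℕ => ⌊(m : ℝ) ^ a⌋₊) ?_ (aux_b_super a ha) ?_
    (aux_c_summable a ha) t ht0 hsupp hlim
  · have : a ≠ 0 := by linarith
    simp [Real.zero_rpow this]
  · simp
end

section
/- For every γ > 1 there exists C > 0 such that for all integers n ≥ 3: Σ_{k ≥ 3, k ≠ n} 1/( (log k)^γ · |n − k| ) ≤ C/(log n)^{γ − 1}. -/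
lemma aux_log_one {k : ℕ} (hk : 3 ≤ k) : 1 ≤ Real.log k := by
  have h3 : (3:ℝ) ≤ k := by exact_mod_cast hk
  rw [Real.le_log_iff_exp_le (by linarith)]
  have := Real.exp_one_lt_d9
  linarith

lemma aux_tele (γ : ℝ) (hγ : 1 < γ) {k : ℕ} (hk : 3 ≤ k) :
    1 / (((k + 1 : ℕ) : ℝ) * Real.log ((k + 1 : ℕ) : ℝ) ^ γ) ≤
      (Real.log k ^ (1 - γ) - Real.log ((k + 1 : ℕ) : ℝ) ^ (1 - γ)) / (γ - 1) := by
  have ha := aux_log_one hk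
  have hb := aux_log_one (show 3 ≤ k + 1 by omega)
  have hk0 : (0:ℝ) < k := by exact_mod_cast (by omega : 0 < k)
  have hk1 : (0:ℝ) < ((k+1:ℕ):ℝ) := by positivity
  have hd : 1 / ((k+1:ℕ):ℝ) ≤ Real.log ((k+1:ℕ):ℝ) - Real.log k := by
    have := Real.log_le_sub_one_of_pos (show 0 < (k:ℝ) / ((k+1:ℕ):ℝ) by positivity)
    rw [Real.log_div hk0.ne' hk1.ne'] at this
    have h2 : (k:ℝ) / ((k+1:ℕ):ℝ) - 1 = - (1 / ((k+1:ℕ):ℝ)) := by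
      push_cast
      field_simp
      ring
    linarith
  generalize hA : Real.log k = a at *
  generalize hB : Real.log ((k+1:ℕ):ℝ) = b at *
  generalize ((k+1:ℕ):ℝ) = c at *
  have ha0 : 0 < a := by linarith
  have hb0 : 0 < b := by linarith
  have h1 : 1 + (γ - 1) * (1 - a / b) ≤ (a / b) ^ (1 - γ) := by
    rw [Real.rpow_def_of_pos (by positivity)]
    have e1 := Real.add_one_le_exp (Real.log (a/b) * (1 - γ))
    have e2 := Real.log_le_sub_one_of_pos (show 0 < a / b by positivity)
    nlinarith
  rw [Real.div_rpow ha0.le hb0.le, le_div_iff₀ (by positivity)] at h1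
  have h3 : b ^ (1 - γ) = b * (b ^ γ)⁻¹ := by
    rw [sub_eq_add_neg, Real.rpow_add hb0, Real.rpow_one, Real.rpow_neg hb0.le]
  rw [le_div_iff₀ (by linarith)]
  have hp : 0 < (b ^ γ)⁻¹ := by positivity
  have h4 : (γ - 1) * (1 - a / b) * b ^ (1 - γ) = (γ - 1) * (b - a) * (b ^ γ)⁻¹ := by
    rw [h3]; field_simp
  have h5 : 1 / (c * b ^ γ) * (γ - 1) = (γ - 1) * (1 / c) * (b ^ γ)⁻¹ := by
    field_simp
  rw [h5]
  have h6 : (γ - 1) * (1 / c) * (b ^ γ)⁻¹ ≤ (γ - 1) * (b - a) * (b ^ γ)⁻¹ := by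
    have : 0 ≤ γ - 1 := by linarith
    gcongr
  linarith

lemma aux_harm_s13 (n : ℕ) (hn : 3 ≤ n) :
    ∑ j ∈ Finset.range n, 1 / ((j:ℝ) + 1) ≤ 2 * Real.log n := by
  have h := harmonic_le_one_add_log n
  have h1 := aux_log_one hn
  have : ((harmonic n : ℚ) : ℝ) = ∑ j ∈ Finset.range n, 1 / ((j:ℝ) + 1) := by
    simp [harmonic]
  linarith

lemma aux_log_half {n k : ℕ} (hn : 3 ≤ n) (h : n < k ^ 2) : Real.log n / 2 ≤ Real.log k := by
  have : Real.log n ≤ Real.log ((k:ℝ)^2) := by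
    apply Real.log_le_log
    · exact_mod_cast (by omega : 0 < n)
    · exact_mod_cast h.le
  rw [Real.log_pow] at this
  push_cast at this
  linarith

theorem aux_main_s13 (γ : ℝ) (hγ : 1 < γ) (n : ℕ) (hn : 3 ≤ n) (f : ℕ → ℝ)
    (hf : f = fun k : ℕ => if 3 ≤ k ∧ k ≠ n then
      1 / (Real.log k ^ γ * |(n : ℝ) - (k : ℝ)|) else 0) (N : ℕ) :
    ∑ k ∈ Finset.range N, f k ≤ 2 / Real.sqrt n + (2 / Real.log n) ^ γ * (2 * Real.log n)
      + (2 / Real.log n) ^ γ * (2 * Real.log n) + 2 / (γ - 1) * Real.log n ^ (1 - γ) := by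
  have hL := aux_log_one hn
  have hn0 : (0:ℝ) < n := by exact_mod_cast (by omega : 0 < n)
  have hf0 : ∀ k, 0 ≤ f k := by
    intro k
    rw [hf]
    dsimp only
    split_ifs with h
    · have := aux_log_one h.1
      positivity
    · exact le_rfl
  have hmid : ∀ k, n < k ^ 2 → f k ≤ (2 / Real.log n) ^ γ * (1 / |(n:ℝ) - k|) := by
    intro k hk
    rw [hf]
    dsimp only
    split_ifs with h
    · have h1 := aux_log_one h.1
      have h2 := aux_log_half hn hk
      have h3 : 1 / Real.log k ^ γ ≤ (2 / Real.log n) ^ γ := by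
        have e : 1 / Real.log k ^ γ = (1 / Real.log k) ^ γ := by
          rw [Real.div_rpow zero_le_one (by linarith), Real.one_rpow]
        rw [e]
        apply Real.rpow_le_rpow (by positivity) _ (by linarith)
        rw [div_le_div_iff₀ (by linarith) (by linarith)]
        linarith
      rw [← one_div_mul_one_div]
      gcongr
    · positivity
  have hsub : ∑ k ∈ Finset.range N, f k ≤ ∑ k ∈ Finset.range (n + 1 + n + N), f k :=
    Finset.sum_le_sum_of_subset_of_nonneg
      (Finset.range_subset_range.2 (by omega)) (fun i _ _ => hf0 i)
  refine hsub.trans ?_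
  have hfn : f n = 0 := by rw [hf]; simp
  rw [Finset.sum_range_add, Finset.sum_range_add, Finset.sum_range_succ, hfn, add_zero]
  have P1 : ∑ k ∈ Finset.range n, f k ≤
      2 / Real.sqrt n + (2 / Real.log n) ^ γ * (2 * Real.log n) := by
    have hpt : ∀ k ∈ Finset.range n, f k ≤ (if 3 ≤ k ∧ k ^ 2 ≤ n then 2 / (n:ℝ) else 0) +
        (2 / Real.log n) ^ γ * (1 / |(n:ℝ) - k|) := by
      intro k hk
      by_cases h : n < k ^ 2
      · rw [if_neg (by omega), zero_add]
        exact hmid k h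
      · by_cases h3 : 3 ≤ k
        · rw [if_pos ⟨h3, by omega⟩]
          have hkn : k < n := Finset.mem_range.1 hk
          have h1 := aux_log_one h3
          have h2k : 2 * k ≤ n := by nlinarith
          have h2k' : 2 * (k:ℝ) ≤ n := by exact_mod_cast h2k
          have : f k ≤ 2 / n := by
            rw [hf]
            dsimp only
            rw [if_pos ⟨h3, by omega⟩, abs_of_nonneg (by linarith),
              div_le_div_iff₀ (mul_pos (by positivity) (by linarith)) hn0]
            have := Real.one_le_rpow h1 (show 0 ≤ γ by linarith)
            nlinarith
          have : 0 ≤ (2 / Real.log n) ^ γ * (1 / |(n:ℝ) - k|) := by positivity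
          linarith
        · have : f k = 0 := by
            rw [hf]
            dsimp only
            rw [if_neg (by omega)]
          rw [this, if_neg (by omega)]
          positivity
    refine (Finset.sum_le_sum hpt).trans ?_
    rw [Finset.sum_add_distrib, ← Finset.mul_sum]
    apply add_le_add
    · rw [← Finset.sum_filter, Finset.sum_const, nsmul_eq_mul]
      have hc : (Finset.filter (fun k => 3 ≤ k ∧ k ^ 2 ≤ n) (Finset.range n)).card
          ≤ Nat.sqrt n := by
        have : (Finset.filter (fun k => 3 ≤ k ∧ k ^ 2 ≤ n) (Finset.range n)) ⊆
            Finset.Icc 1 (Nat.sqrt n) := by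
          intro k hk
          simp only [Finset.mem_filter, Finset.mem_Icc] at *
          exact ⟨by omega, Nat.le_sqrt'.2 hk.2.2⟩
        simpa using Finset.card_le_card this
      have hc' : ((Finset.filter (fun k => 3 ≤ k ∧ k ^ 2 ≤ n) (Finset.range n)).card : ℝ)
          ≤ Real.sqrt n := le_trans (by exact_mod_cast hc) Real.nat_sqrt_le_real_sqrt
      calc _ ≤ Real.sqrt n * (2 / n) := by gcongr
        _ = 2 / Real.sqrt n := by
          have := Real.mul_self_sqrt hn0.le
          have h0 := Real.sqrt_pos.2 hn0
          rw [eq_div_iff h0.ne']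
          field_simp
          nlinarith
    · gcongr
      refine le_trans (le_of_eq ?_) (aux_harm_s13 n hn)
      rw [← Finset.sum_range_reflect]
      apply Finset.sum_congr rfl
      intro j hj
      have hj := Finset.mem_range.1 hj
      have : ((n - 1 - j : ℕ) : ℝ) = n - 1 - j := by
        rw [Nat.cast_sub (by omega), Nat.cast_sub (by omega)]; simp
      rw [this]
      congr 1
      rw [abs_of_nonneg] <;> ring_nf
      positivity
  have P2 : ∑ j ∈ Finset.range n, f (n + 1 + j) ≤
      (2 / Real.log n) ^ γ * (2 * Real.log n) := by
    refine (Finset.sum_le_sum (fun j _ => hmid (n+1+j)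
      (lt_of_lt_of_le (by omega) (Nat.le_self_pow two_ne_zero (n+1+j))))).trans ?_
    rw [← Finset.mul_sum]
    gcongr
    refine le_trans (le_of_eq ?_) (aux_harm_s13 n hn)
    apply Finset.sum_congr rfl
    intro j hj
    congr 1
    push_cast
    rw [abs_sub_comm, abs_of_nonneg] <;> ring_nf
    positivity
  have P3 : ∑ j ∈ Finset.range N, f (n + 1 + n + j) ≤
      2 / (γ - 1) * Real.log n ^ (1 - γ) := by
    let g : ℕ → ℝ := fun j => Real.log ((n + n + j : ℕ) : ℝ) ^ (1 - γ)
    have hpt : ∀ j ∈ Finset.range N, f (n + 1 + n + j) ≤ 2 / (γ - 1) * (g j - g (j+1)) := by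
      intro j _
      have ht := aux_tele γ hγ (show 3 ≤ n + n + j by omega)
      have e : n + 1 + n + j = n + n + j + 1 := by ring
      rw [e]
      have : f (n + n + j + 1) ≤
          2 * (1 / (((n + n + j + 1 : ℕ) : ℝ) * Real.log ((n + n + j + 1 : ℕ) : ℝ) ^ γ)) := by
        have h1 := aux_log_one (show 3 ≤ n + n + j + 1 by omega)
        rw [hf]
        dsimp only
        rw [if_pos ⟨by omega, by omega⟩, abs_sub_comm]
        generalize Real.log ((n + n + j + 1 : ℕ) : ℝ) = b at *
        have hb : 0 < b ^ γ := by positivity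
        have hj : (0:ℝ) ≤ j := by positivity
        push_cast
        rw [abs_of_nonneg (by linarith), mul_one_div, div_le_div_iff₀
          (mul_pos hb (by linarith)) (mul_pos (by linarith) hb)]
        nlinarith
      refine this.trans ?_
      refine (mul_le_mul_of_nonneg_left ht zero_le_two).trans (le_of_eq ?_)
      simp only [g, ← add_assoc]
      ring
    refine (Finset.sum_le_sum hpt).trans ?_
    rw [← Finset.mul_sum, Finset.sum_range_sub']
    have : 0 < γ - 1 := by linarith
    gcongr
    have h1 : 0 ≤ g N := by
      have := aux_log_one (show 3 ≤ n + n + N by omega)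
      simp only [g]
      positivity
    have h2 : g 0 ≤ Real.log n ^ (1 - γ) := by
      simp only [g]
      apply Real.rpow_le_rpow_of_nonpos (by linarith) _ (by linarith)
      apply Real.log_le_log hn0
      push_cast
      linarith
    linarith
  linarith

theorem statement13 (γ : ℝ) (hγ : 1 < γ) :
    ∃ C > (0 : ℝ), ∀ n : ℕ, 3 ≤ n →
      (∑' k : ℕ, if 3 ≤ k ∧ k ≠ n then 1 / (Real.log k ^ γ * |(n : ℝ) - (k : ℝ)|) else 0)
        ≤ C / Real.log n ^ (γ - 1) := by
  have hg : 0 < γ - 1 := by linarith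
  refine ⟨2 * (2 * (γ - 1)) ^ (γ - 1) + 4 * 2 ^ γ + 2 / (γ - 1), by positivity, ?_⟩
  intro n hn
  have hL := aux_log_one hn
  have hn0 : (0:ℝ) < n := by exact_mod_cast (by omega : 0 < n)
  have hL0 : 0 < Real.log n := by linarith
  have hs := Real.sqrt_pos.2 hn0
  have B := aux_main_s13 γ hγ n hn _ rfl
  refine (Real.tsum_le_of_sum_range_le ?_ B).trans ?_
  · intro k
    split_ifs with h
    · have := aux_log_one h.1
      positivity
    · exact le_rfl
  have e1 : Real.log n ^ (1 - γ) = 1 / Real.log n ^ (γ - 1) := by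
    rw [← neg_sub, Real.rpow_neg hL0.le, one_div]
  have e2 : (2 / Real.log n) ^ γ * (2 * Real.log n) = 2 * 2 ^ γ / Real.log n ^ (γ - 1) := by
    rw [Real.div_rpow zero_le_two hL0.le, Real.rpow_sub_one hL0.ne']
    field_simp
  have e3 : 2 / Real.sqrt n ≤ 2 * (2 * (γ - 1)) ^ (γ - 1) / Real.log n ^ (γ - 1) := by
    have hlog := Real.log_le_rpow_div hn0.le (show 0 < 1 / (2 * (γ - 1)) by positivity)
    have h1 := Real.rpow_le_rpow hL0.le hlog hg.le
    rw [Real.div_rpow (by positivity) (by positivity), ← Real.rpow_mul hn0.le,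
      show 1 / (2 * (γ - 1)) * (γ - 1) = 1 / 2 by field_simp, ← Real.sqrt_eq_rpow,
      one_div (2 * (γ - 1)), Real.inv_rpow (by positivity), div_inv_eq_mul] at h1
    rw [div_le_div_iff₀ hs (by positivity)]
    linarith
  rw [e2, e1]
  have : (2 * (2 * (γ - 1)) ^ (γ - 1) + 4 * 2 ^ γ + 2 / (γ - 1)) / Real.log n ^ (γ - 1) =
    2 * (2 * (γ - 1)) ^ (γ - 1) / Real.log n ^ (γ - 1) + 2 * 2 ^ γ / Real.log n ^ (γ - 1)
     + 2 * 2 ^ γ / Real.log n ^ (γ - 1) + 2 / (γ - 1) * (1 / Real.log n ^ (γ - 1)) := by ring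
  rw [this]
  linarith
end

section
/- For every a > 1 there exists C > 0 such that for all integers k ≥ 3: Σ_{n ≥ 3, n ≠ k} (1/|n − k|) · Σ_{j ≥ 3, j ≠ n} 1/( (log j)^{2a} · |n − j| ) ≤ C/(log k)^{2(a−1)}. In particular the left-hand side is bounded uniformly in k. -/
lemma aux_log3 {n : ℕ} (hn : 3 ≤ n) : 1 ≤ Real.log n := by
  have h3 : (3 : ℝ) ≤ n := by exact_mod_cast hn
  rw [Real.le_log_iff_exp_le (by linarith)]
  linarith [Real.exp_one_lt_d9]

lemma aux_A (b : ℝ) (hb : 1 < b) : ∃ C > (0 : ℝ), ∀ k n : ℕ, 3 ≤ n → n ^ 3 ≤ k →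
    1 / (|(n : ℝ) - k| * Real.log n ^ b) ≤ C / Real.log k ^ (b - 1) * (1 / (n : ℝ) ^ 2) := by
  set e : ℝ := 1 / (3 * (b - 1)) with he
  have hb' : 0 < b - 1 := by linarith
  have he0 : 0 < e := by positivity
  refine ⟨2 / e ^ (b - 1), by positivity, fun k n hn hk => ?_⟩
  have hn' : (3 : ℝ) ≤ n := by exact_mod_cast hn
  have hk' : (n : ℝ) ^ 3 ≤ k := by exact_mod_cast hk
  have hsq : 9 ≤ (n : ℝ) * n := by nlinarith
  have hnk : 2 * (n : ℝ) ≤ k := by nlinarith [mul_le_mul_of_nonneg_right hsq (show (0:ℝ) ≤ n by linarith)]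
  have hk0 : (0 : ℝ) < k := by linarith
  have hk3 : 3 ≤ k := by
    have : (3 : ℝ) ≤ k := by linarith
    exact_mod_cast this
  have hL := aux_log3 hk3
  have hLb : 0 < Real.log k ^ (b - 1) := Real.rpow_pos_of_pos (by linarith) _
  have hlog : 1 ≤ Real.log n ^ b := Real.one_le_rpow (aux_log3 hn) (by linarith)
  have h1 : Real.log k ^ (b - 1) ≤ (k : ℝ) ^ (1 / 3 : ℝ) / e ^ (b - 1) := by
    have := Real.rpow_le_rpow (by linarith) (Real.log_le_rpow_div hk0.le he0) hb'.le
    rw [Real.div_rpow (by positivity) he0.le, ← Real.rpow_mul hk0.le] at this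
    have h : e * (b - 1) = 1 / 3 := by rw [he]; field_simp
    rwa [h] at this
  have h2 : (n : ℝ) ^ 2 ≤ (k : ℝ) ^ (2 / 3 : ℝ) := by
    have := Real.rpow_le_rpow (by positivity) hk' (show (0 : ℝ) ≤ 2 / 3 by norm_num)
    refine le_trans (le_of_eq ?_) this
    rw [← Real.rpow_natCast, ← Real.rpow_natCast, ← Real.rpow_mul (by positivity)]
    norm_num
  have h3 : (n : ℝ) ^ 2 * Real.log k ^ (b - 1) ≤ k / e ^ (b - 1) := by
    calc _ ≤ (k : ℝ) ^ (2 / 3 : ℝ) * ((k : ℝ) ^ (1 / 3 : ℝ) / e ^ (b - 1)) := by gcongr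
      _ = k / e ^ (b - 1) := by
        rw [← mul_div_assoc, ← Real.rpow_add hk0]; norm_num
  have h4 : (k : ℝ) / 2 ≤ |(n : ℝ) - k| := by
    rw [abs_of_nonpos (by linarith)]; linarith
  have h5 : (k : ℝ) / 2 ≤ |(n : ℝ) - k| * Real.log n ^ b := by nlinarith
  have hE : 0 < e ^ (b - 1) := by positivity
  calc _ ≤ 1 / ((k : ℝ) / 2) := by gcongr
    _ ≤ _ := by
      rw [le_div_iff₀ hE] at h3
      rw [div_div, div_mul_div_comm, mul_one, div_le_div_iff₀ (by positivity) (by positivity)]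
      nlinarith

lemma aux_B (b : ℝ) (hb : 1 < b) (k n : ℕ) (hk : 3 ≤ k) (hn : 3 ≤ n) (h : k < n ^ 3) :
    1 / (|(n : ℝ) - k| * Real.log n ^ b) ≤ 3 ^ b / Real.log k ^ b * |(n : ℝ) - k|⁻¹ := by
  have hL := aux_log3 hk
  have hLn := aux_log3 hn
  have h1 : Real.log k ≤ 3 * Real.log n := by
    have : Real.log k ≤ Real.log ((n : ℝ) ^ 3) :=
      Real.log_le_log (by positivity) (by exact_mod_cast h.le)
    rwa [Real.log_pow] at this
  have h2 : Real.log k ^ b ≤ 3 ^ b * Real.log n ^ b := by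
    rw [← Real.mul_rpow (by norm_num) (by linarith)]
    exact Real.rpow_le_rpow (by linarith) h1 (by linarith)
  have h3 : 0 < Real.log k ^ b := Real.rpow_pos_of_pos (by linarith) _
  have h4 : 0 < Real.log n ^ b := Real.rpow_pos_of_pos (by linarith) _
  rw [one_div, mul_inv, mul_comm]
  gcongr
  rw [inv_eq_one_div, div_le_div_iff₀ h4 h3]
  linarith

lemma aux_D (b : ℝ) (hb : 1 < b) (k n : ℕ) (hk : 3 ≤ k) (h : 2 * k ≤ n) :
    1 / (|(n : ℝ) - k| * Real.log n ^ b) ≤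
      2 / (b - 1) * (Real.log ((n : ℝ) - 1) ^ (1 - b) - Real.log n ^ (1 - b)) := by
  have hk' : (3 : ℝ) ≤ k := by exact_mod_cast hk
  have hn' : 2 * (k : ℝ) ≤ n := by exact_mod_cast h
  have hd : ∀ x : ℝ, 1 < x → HasDerivAt (fun x => Real.log x ^ (1 - b))
      (x⁻¹ * (1 - b) * Real.log x ^ (1 - b - 1)) x := fun x hx =>
    (Real.hasDerivAt_log (by linarith)).rpow_const (Or.inl (Real.log_pos hx).ne')
  obtain ⟨c, ⟨hc1, hc2⟩, hc⟩ := exists_hasDerivAt_eq_slope (fun x => Real.log x ^ (1 - b))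
    (fun x => x⁻¹ * (1 - b) * Real.log x ^ (1 - b - 1)) (show (n : ℝ) - 1 < n by linarith)
    (fun x hx => (hd x (by linarith [hx.1])).continuousAt.continuousWithinAt)
    (fun x hx => hd x (by linarith [hx.1]))
  have hc0 : 0 < Real.log c := Real.log_pos (by linarith)
  have hn0 : 0 < Real.log n := Real.log_pos (by linarith)
  have e1 : Real.log ((n : ℝ) - 1) ^ (1 - b) - Real.log n ^ (1 - b)
      = (b - 1) * (c⁻¹ * (Real.log c ^ b)⁻¹) := by
    have : 1 - b - 1 = -b := by ring
    rw [this, Real.rpow_neg hc0.le] at hc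
    simp only [sub_sub_cancel, div_one] at hc
    linarith
  have hb' : 0 < b - 1 := by linarith
  have hcb : 0 < Real.log c ^ b := by positivity
  rw [e1, ← mul_assoc, div_mul_cancel₀ _ hb'.ne']
  have h1 : (n : ℝ) / 2 ≤ |(n : ℝ) - k| := by
    rw [abs_of_nonneg (by linarith)]; linarith
  have h2 : Real.log c ^ b ≤ Real.log n ^ b :=
    Real.rpow_le_rpow hc0.le (Real.log_le_log (by linarith) hc2.le) (by linarith)
  have hcp : 0 < c := by linarith
  calc _ ≤ 1 / ((c / 2) * Real.log c ^ b) := by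
        gcongr
        linarith
    _ = _ := by field_simp

lemma sum_D (g : ℝ → ℝ) (k : ℕ) (N : ℕ) :
    ∑ n ∈ Finset.range N, (if k < n then g ((n : ℝ) - 1) - g n else 0) =
      if k < N then g k - g ((N : ℝ) - 1) else 0 := by
  induction N with
  | zero => simp
  | succ N ih =>
    rw [Finset.sum_range_succ, ih]
    rcases lt_trichotomy k N with h | h | h
    · simp [h, Nat.lt_succ_of_lt h]
    · subst h; simp
    · simp [not_lt.2 h.le, show ¬ k < N + 1 by omega]

lemma sum_harm (k : ℕ) : ∑ i ∈ Finset.range k, ((i : ℝ) + 1)⁻¹ ≤ 1 + Real.log k := by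
  have := harmonic_le_one_add_log k
  simpa [harmonic] using this

lemma sum_B (k N : ℕ) (hk : 3 ≤ k) :
    ∑ n ∈ Finset.range N, (if n < 2 * k then |(n : ℝ) - k|⁻¹ else 0) ≤ 4 * Real.log k := by
  have h0 : ∑ n ∈ Finset.range N, (if n < 2 * k then |(n : ℝ) - k|⁻¹ else 0) ≤
      ∑ n ∈ Finset.range (k + k), |(n : ℝ) - k|⁻¹ := by
    rw [← Finset.sum_filter]
    apply Finset.sum_le_sum_of_subset_of_nonneg
    · intro x hx
      simp at hx ⊢
      omega
    · intros; positivity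
  have hL := aux_log3 hk
  have h1 := sum_harm k
  have h2 : ∑ n ∈ Finset.range k, |(n : ℝ) - k|⁻¹ = ∑ i ∈ Finset.range k, ((i : ℝ) + 1)⁻¹ := by
    rw [← Finset.sum_range_reflect]
    apply Finset.sum_congr rfl
    intro i hi
    have hi' : i + 1 ≤ k := by simpa using hi
    rw [Nat.sub_sub, add_comm 1 i, Nat.cast_sub hi']
    congr 1
    push_cast
    rw [abs_of_nonpos (by linarith)]
    ring
  have h3 : ∑ n ∈ Finset.range k, |((k + n : ℕ) : ℝ) - k|⁻¹ ≤
      ∑ i ∈ Finset.range k, ((i : ℝ) + 1)⁻¹ := by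
    calc _ ≤ ∑ n ∈ Finset.range (k + 1), |((k + n : ℕ) : ℝ) - k|⁻¹ := by
          rw [Finset.sum_range_succ]
          have : 0 ≤ |((k + k : ℕ) : ℝ) - k|⁻¹ := by positivity
          linarith
      _ = _ := by
          rw [Finset.sum_range_succ']
          simp
          apply Finset.sum_congr rfl
          intro i _
          rw [abs_of_nonneg (by positivity)]
  rw [Finset.sum_range_add] at h0
  linarith

lemma key (b : ℝ) (hb : 1 < b) : ∃ C > (0 : ℝ), ∀ k : ℕ, 3 ≤ k → ∀ N : ℕ,
    ∑ n ∈ Finset.range N, (if 3 ≤ n ∧ n ≠ k then 1 / (|(n : ℝ) - k| * Real.log n ^ b) else 0)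
      ≤ C / Real.log k ^ (b - 1) := by
  obtain ⟨C, hC, hA⟩ := aux_A b hb
  have hs : Summable (fun n : ℕ => 1 / (n : ℝ) ^ 2) :=
    Real.summable_one_div_nat_pow.2 (by norm_num)
  set S := ∑' n : ℕ, 1 / (n : ℝ) ^ 2
  have hS : 0 ≤ S := tsum_nonneg fun n => by positivity
  have hb' : 0 < b - 1 := by linarith
  refine ⟨C * S + 3 ^ b * 4 + 2 / (b - 1), by positivity, fun k hk N => ?_⟩
  have hL := aux_log3 hk
  have hL0 : 0 < Real.log k := by linarith
  set g : ℝ → ℝ := fun x => Real.log x ^ (1 - b) with hg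
  have hgn : ∀ n : ℕ, 0 ≤ g ((n : ℝ) - 1) - g n ∨ n ≤ k := by
    intro n
    by_cases h : n ≤ k
    · exact Or.inr h
    left
    have h1 : (k : ℝ) + 1 ≤ n := by
      have : k + 1 ≤ n := by omega
      exact_mod_cast this
    have h3 : (3 : ℝ) ≤ k := by exact_mod_cast hk
    have := Real.rpow_le_rpow_of_nonpos (Real.log_pos (show 1 < (n : ℝ) - 1 by linarith))
      (Real.log_le_log (by linarith) (show (n : ℝ) - 1 ≤ n by linarith))
      (show 1 - b ≤ 0 by linarith)
    simp only [hg]; linarith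
  have hpt : ∀ n : ℕ,
      (if 3 ≤ n ∧ n ≠ k then 1 / (|(n : ℝ) - k| * Real.log n ^ b) else 0) ≤
      C / Real.log k ^ (b - 1) * (1 / (n : ℝ) ^ 2) +
      3 ^ b / Real.log k ^ b * (if n < 2 * k then |(n : ℝ) - k|⁻¹ else 0) +
      2 / (b - 1) * (if k < n then g ((n : ℝ) - 1) - g n else 0) := by
    intro n
    have a1 : 0 ≤ C / Real.log k ^ (b - 1) * (1 / (n : ℝ) ^ 2) := by positivity
    have a2 : 0 ≤ 3 ^ b / Real.log k ^ b * (if n < 2 * k then |(n : ℝ) - k|⁻¹ else 0) := by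
      split_ifs <;> positivity
    have a3 : 0 ≤ 2 / (b - 1) * (if k < n then g ((n : ℝ) - 1) - g n else 0) := by
      apply mul_nonneg (by positivity)
      split_ifs with h
      · exact (hgn n).resolve_right (by omega)
      · exact le_rfl
    by_cases h : 3 ≤ n ∧ n ≠ k
    · rw [if_pos h]
      by_cases c1 : n ^ 3 ≤ k
      · linarith [hA k n h.1 c1]
      by_cases c2 : n < 2 * k
      · have := aux_B b hb k n hk h.1 (by omega)
        rw [if_pos c2] at a2 ⊢
        linarith
      · have := aux_D b hb k n hk (by omega)
        rw [if_pos (show k < n by omega)] at a3 ⊢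
        simp only [hg] at a3 ⊢
        linarith
    · rw [if_neg h]; linarith
  refine (Finset.sum_le_sum fun n _ => hpt n).trans ?_
  rw [Finset.sum_add_distrib, Finset.sum_add_distrib, ← Finset.mul_sum, ← Finset.mul_sum,
    ← Finset.mul_sum, sum_D]
  have b1 : ∑ n ∈ Finset.range N, 1 / (n : ℝ) ^ 2 ≤ S :=
    hs.sum_le_tsum _ fun n _ => by positivity
  have b2 := sum_B k N hk
  have b3 : (if k < N then g k - g ((N : ℝ) - 1) else 0) ≤ 1 / Real.log k ^ (b - 1) := by
    have e : g k = 1 / Real.log k ^ (b - 1) := by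
      simp only [hg]
      rw [show 1 - b = -(b - 1) by ring, Real.rpow_neg hL0.le, one_div]
    split_ifs with h
    · have : 0 ≤ g ((N : ℝ) - 1) := by
        apply Real.rpow_nonneg
        apply Real.log_nonneg
        have : (k : ℝ) + 1 ≤ N := by exact_mod_cast h
        have h3 : (3 : ℝ) ≤ k := by exact_mod_cast hk
        linarith
      linarith
    · positivity
  have e2 : Real.log k ^ b = Real.log k ^ (b - 1) * Real.log k := by
    rw [← Real.rpow_add_one hL0.ne']; ring_nf
  have hP : 0 < Real.log k ^ (b - 1) := by positivity
  calc _ ≤ C / Real.log k ^ (b - 1) * S + 3 ^ b / Real.log k ^ b * (4 * Real.log k) +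
        2 / (b - 1) * (1 / Real.log k ^ (b - 1)) := by gcongr
    _ = _ := by
      rw [e2]; field_simp

theorem statement14 (a : ℝ) (ha : 1 < a) :
    ∃ C > (0 : ℝ), ∀ k : ℕ, 3 ≤ k →
      (∑' n : ℕ, if 3 ≤ n ∧ n ≠ k then
          (1 / |(n : ℝ) - (k : ℝ)|) *
            ∑' j : ℕ, (if 3 ≤ j ∧ j ≠ n then
              1 / (Real.log j ^ (2 * a) * |(n : ℝ) - (j : ℝ)|) else 0)
        else 0)
        ≤ C / Real.log k ^ (2 * (a - 1)) := by
  obtain ⟨C1, hC1, h1⟩ := key (2 * a) (by linarith)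
  obtain ⟨C2, hC2, h2⟩ := key (2 * a - 1) (by linarith)
  have hnn : ∀ n j : ℕ, 0 ≤ (if 3 ≤ j ∧ j ≠ n then
      1 / (Real.log j ^ (2 * a) * |(n : ℝ) - (j : ℝ)|) else 0) := by
    intro n j
    split_ifs with h
    · have := aux_log3 h.1
      positivity
    · exact le_rfl
  refine ⟨C1 * C2, by positivity, fun k hk => ?_⟩
  apply Real.tsum_le_of_sum_range_le
  · intro n
    split_ifs
    · exact mul_nonneg (by positivity) (tsum_nonneg (hnn n))
    · exact le_rfl
  intro N
  have hin : ∀ n : ℕ, 3 ≤ n → ∑' j : ℕ, (if 3 ≤ j ∧ j ≠ n then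
      1 / (Real.log j ^ (2 * a) * |(n : ℝ) - (j : ℝ)|) else 0) ≤
      C1 / Real.log n ^ (2 * a - 1) := by
    intro n hn
    apply Real.tsum_le_of_sum_range_le (hnn n)
    intro M
    refine le_trans (le_of_eq ?_) (h1 n hn M)
    apply Finset.sum_congr rfl
    intro j _
    rw [mul_comm, abs_sub_comm]
  have := h2 k hk N
  calc _ ≤ ∑ n ∈ Finset.range N, C1 * (if 3 ≤ n ∧ n ≠ k then
        1 / (|(n : ℝ) - k| * Real.log n ^ (2 * a - 1)) else 0) := by
        apply Finset.sum_le_sum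
        intro n _
        split_ifs with h
        · calc _ ≤ (1 / |(n : ℝ) - (k : ℝ)|) * (C1 / Real.log n ^ (2 * a - 1)) := by
                gcongr
                exact hin n h.1
            _ = _ := by
                rw [div_mul_div_comm, mul_one_div, one_mul]
        · simp
    _ ≤ C1 * (C2 / Real.log k ^ (2 * a - 1 - 1)) := by
        rw [← Finset.mul_sum]
        gcongr
    _ = _ := by
        rw [show 2 * a - 1 - 1 = 2 * (a - 1) by ring, mul_div_assoc]
end
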